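/- Let d ≥ 2, let Σ ⊂ GL_d(ℝ) be a compact subset, and let μ₀, μ₁ be Borel probability measures supported in Σ. Assume μ₀ is quasi-irreducible and L_1(μ₀) > L_2(μ₀). Then the map t ↦ L_1((1−t)μ₀ + tμ₁) is given by a convergent power series near 0: there exist ε > 0 and real coefficients (a_k)_{k≥0} with Σ_k |a_k| ε^k < ∞ such that L_1((1−t)μ₀ + tμ₁) = Σ_{k≥0} a_k t^k for all t ∈ [0, ε). -/

import Mathlib

open MeasureTheory Filter
open scoped LinearAlgebra.Projectivization

noncomputable section

abbrev GLd (d : ℕ) := GL (Fin d) ℝ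
abbrev Ed (d : ℕ) := EuclideanSpace ℝ (Fin d)
abbrev Pd (d : ℕ) := ℙ ℝ (Ed d)

variable {d : ℕ}

instance : MeasurableSpace (GLd d) := borel _
instance : BorelSpace (GLd d) := ⟨rfl⟩

instance : TopologicalSpace (Pd d) :=
  (instTopologicalSpaceQuotient : TopologicalSpace (Quotient (projectivizationSetoid ℝ (Ed d))))
instance : MeasurableSpace (Pd d) := borel _
instance : BorelSpace (Pd d) := ⟨rfl⟩

/-- The continuous linear map on Euclidean space induced by `g ∈ GL_d(ℝ)`. -/
def glCLM (g : GLd d) : Ed d →L[ℝ] Ed d :=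
  Matrix.toEuclideanCLM (𝕜 := ℝ) (g : Matrix (Fin d) (Fin d) ℝ)

/-- The operator norm of `g ∈ GL_d(ℝ)`. -/
def gnorm (g : GLd d) : ℝ := ‖glCLM g‖

lemma glCLM_leftInv (g : GLd d) (v : Ed d) : glCLM g⁻¹ (glCLM g v) = v := by
  have h : glCLM (d := d) g⁻¹ * glCLM g = 1 := by
    rw [glCLM, glCLM, ← map_mul]
    norm_cast
    rw [inv_mul_cancel g]
    exact map_one _
  calc glCLM g⁻¹ (glCLM g v) = (glCLM g⁻¹ * glCLM g) v := rfl
    _ = v := by rw [h]; rfl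

lemma glLinear_injective (g : GLd d) : Function.Injective (glCLM g).toLinearMap :=
  Function.LeftInverse.injective (g := (glCLM g⁻¹)) (fun v => glCLM_leftInv g v)

/-- The projective action of `g ∈ GL_d(ℝ)` on `ℙ(ℝ^d)`. -/
def pact (g : GLd d) : Pd d → Pd d :=
  Projectivization.map (glCLM g).toLinearMap (glLinear_injective g)

/-- The projective distance `δ` on `ℙ(ℝ^d)`, computed on representatives. -/
def pdelta (x y : Pd d) : ℝ :=
  Real.sqrt (‖x.rep‖ ^ 2 * ‖y.rep‖ ^ 2 - (inner ℝ x.rep y.rep : ℝ) ^ 2) /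
    (‖x.rep‖ * ‖y.rep‖)

/-- Convolution of two measures on `GL_d(ℝ)`. -/
def mconv (μ ν : Measure (GLd d)) : Measure (GLd d) :=
  (μ.prod ν).map (fun p => p.1 * p.2)

/-- `n`-fold convolution power of a measure on `GL_d(ℝ)`. -/
def mconvN (μ : Measure (GLd d)) : ℕ → Measure (GLd d)
  | 0 => Measure.dirac 1
  | n + 1 => if n = 0 then μ else mconv (mconvN μ n) μ

/-- The top Lyapunov exponent of a (compactly supported) measure on `GL_d(ℝ)`. -/
def L1 (μ : Measure (GLd d)) : ℝ :=
  limUnder atTop (fun n : ℕ => (n : ℝ)⁻¹ * ∫ g, Real.log (gnorm g) ∂(mconvN μ n))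

/-- `N₂ g = s₁(g)s₂(g)`, the product of the two largest singular values. -/
def N2 (g : GLd d) : ℝ :=
  sSup { x | ∃ p q : Ed d, ‖p‖ = 1 ∧ ‖q‖ = 1 ∧ (inner ℝ p q : ℝ) = 0 ∧
    x = Real.sqrt (‖glCLM g p‖ ^ 2 * ‖glCLM g q‖ ^ 2 -
      (inner ℝ (glCLM g p) (glCLM g q) : ℝ) ^ 2) }

/-- `L₁(μ) + L₂(μ)`. -/
def L12 (μ : Measure (GLd d)) : ℝ :=
  limUnder atTop (fun n : ℕ => (n : ℝ)⁻¹ * ∫ g, Real.log (N2 g) ∂(mconvN μ n))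

/-- The second Lyapunov exponent. -/
def L2 (μ : Measure (GLd d)) : ℝ := L12 μ - L1 μ

/-- The top Lyapunov exponent of the restriction of `μ` to an (invariant) subspace `V`. -/
def L1rest (μ : Measure (GLd d)) (V : Submodule ℝ (Ed d)) : ℝ :=
  limUnder atTop (fun n : ℕ => (n : ℝ)⁻¹ *
    ∫ g, Real.log ‖LinearMap.toContinuousLinearMap ((glCLM g).toLinearMap.domRestrict V)‖
      ∂(mconvN μ n))

/-- Quasi-irreducibility of a measure on `GL_d(ℝ)`. -/
def QuasiIrreducible (μ : Measure (GLd d)) : Prop :=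
  ¬ ∃ V : Submodule ℝ (Ed d), V ≠ ⊥ ∧ V ≠ ⊤ ∧
    (∀ᵐ g ∂μ, V.map (glCLM g).toLinearMap = V) ∧ L1rest μ V < L1 μ

/-- Irreducibility of a measure on `GL_d(ℝ)`. -/
def Irred (μ : Measure (GLd d)) : Prop :=
  ¬ ∃ V : Submodule ℝ (Ed d), V ≠ ⊥ ∧ V ≠ ⊤ ∧
    (∀ᵐ g ∂μ, V.map (glCLM g).toLinearMap = V)

/-- The Markov operator associated with a measure on `GL_d(ℝ)`. -/
def Qop (μ : Measure (GLd d)) (φ : Pd d → ℝ) : Pd d → ℝ :=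
  fun v => ∫ g, φ (pact g v) ∂μ

/-- The average `α`-Hölder constant of a measure on `GL_d(ℝ)`. -/
def kalpha (α : ℝ) (μ : Measure (GLd d)) : ℝ :=
  sSup { x | ∃ v₁ v₂ : Pd d, v₁ ≠ v₂ ∧
    x = ∫ g, (pdelta (pact g v₁) (pact g v₂) / pdelta v₁ v₂) ^ α ∂μ }

/-- The `α`-Hölder seminorm of an observable on `ℙ(ℝ^d)`. -/
def valpha (α : ℝ) (φ : Pd d → ℝ) : ℝ :=
  sSup { x | ∃ v₁ v₂ : Pd d, v₁ ≠ v₂ ∧ x = |φ v₁ - φ v₂| / pdelta v₁ v₂ ^ α }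

/-- `φ` is `α`-Hölder: `v_α(φ) < ∞`. -/
def IsHolder (α : ℝ) (φ : Pd d → ℝ) : Prop :=
  BddAbove { x | ∃ v₁ v₂ : Pd d, v₁ ≠ v₂ ∧ x = |φ v₁ - φ v₂| / pdelta v₁ v₂ ^ α }

/-- The total variation distance between two finite measures. -/
def tvDist (μ ν : Measure (GLd d)) [IsFiniteMeasure μ] [IsFiniteMeasure ν] : ℝ :=
  ((μ.toSignedMeasure - ν.toSignedMeasure).totalVariation Set.univ).toReal

/-- A measure is compactly supported. -/
def CompactlySupported (μ : Measure (GLd d)) : Prop :=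
  ∃ K : Set (GLd d), IsCompact K ∧ μ Kᶜ = 0

/-- `S` is the (topological) support of `μ`. -/
def IsSupport (μ : Measure (GLd d)) (S : Set (GLd d)) : Prop :=
  μ Sᶜ = 0 ∧ ∀ x ∈ S, ∀ U : Set (GLd d), IsOpen U → x ∈ U → 0 < μ U

/-- A measure `η` on `ℙ(ℝ^d)` is `μ`-stationary. -/
def Stationary (μ : Measure (GLd d)) (η : Measure (Pd d)) : Prop :=
  ∀ φ : Pd d → ℝ, Continuous φ → (∃ C, ∀ v, |φ v| ≤ C) →
    ∫ v, φ v ∂η = ∫ g, ∫ v, φ (pact g v) ∂η ∂μ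


open scoped Topology

instance secondCountable_GLd : SecondCountableTopology (GLd d) := by
  have h : Topology.IsEmbedding (Units.embedProduct (Matrix (Fin d) (Fin d) ℝ)) :=
    Units.isEmbedding_embedProduct
  have : SecondCountableTopology (Matrix (Fin d) (Fin d) ℝ) :=
    inferInstanceAs (SecondCountableTopology (Fin d → Fin d → ℝ))
  have : SecondCountableTopology (Matrix (Fin d) (Fin d) ℝ)ᵐᵒᵖ :=
    (MulOpposite.opHomeomorph (M := Matrix (Fin d) (Fin d) ℝ)).symm.isEmbedding.secondCountableTopology
  exact h.secondCountableTopology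

/-- The unit sphere. -/
abbrev Sph (d : ℕ) := Metric.sphere (0 : Ed d) 1

lemma continuous_glCLM : Continuous (glCLM (d := d)) := by
  let l : Matrix (Fin d) (Fin d) ℝ →ₗ[ℝ] (Ed d →L[ℝ] Ed d) :=
    (Matrix.toEuclideanCLM (n := Fin d) (𝕜 := ℝ)).toAlgEquiv.toLinearMap
  have hl : Continuous l := l.continuous_of_finiteDimensional
  exact hl.comp Units.continuous_val

lemma glCLM_mul (g h : GLd d) (v : Ed d) : glCLM (g * h) v = glCLM g (glCLM h v) := by
  have : glCLM (g * h) = glCLM g * glCLM h := by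
    simp [glCLM]
  rw [this]; rfl

lemma glCLM_one : glCLM (1 : GLd d) = 1 := by
  simp [glCLM]

lemma glCLM_ne_zero (g : GLd d) {v : Ed d} (hv : v ≠ 0) : glCLM g v ≠ 0 := by
  intro h
  apply hv
  have := glCLM_leftInv g v
  rw [h] at this
  simpa using this.symm

lemma sph_norm (v : Sph d) : ‖(v : Ed d)‖ = 1 := by
  simpa using v.2

lemma sph_ne (v : Sph d) : (v : Ed d) ≠ 0 := by
  intro h
  have := sph_norm v
  rw [h] at this
  simp at this

lemma glCLM_pos (g : GLd d) (v : Sph d) : 0 < ‖glCLM g v‖ :=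
  norm_pos_iff.2 (glCLM_ne_zero g (sph_ne v))

/-- Action on the sphere. -/
def act (g : GLd d) (v : Sph d) : Sph d :=
  ⟨(‖glCLM g v‖)⁻¹ • glCLM g v, by
    have := glCLM_pos g v
    simp [norm_smul, this.ne']⟩

/-- The cocycle. -/
def sig (g : GLd d) (v : Sph d) : ℝ := Real.log ‖glCLM g v‖

lemma act_coe (g : GLd d) (v : Sph d) :
    ((act g v : Sph d) : Ed d) = (‖glCLM g v‖)⁻¹ • glCLM g v := rfl

lemma act_mul (g h : GLd d) (v : Sph d) : act (g * h) v = act g (act h v) := by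
  apply Subtype.ext
  have h1 := glCLM_pos h v
  rw [act_coe, act_coe, act_coe, glCLM_mul]
  simp only [map_smul, norm_smul, norm_inv, norm_norm, smul_smul]
  congr 1
  field_simp

lemma act_one (v : Sph d) : act 1 v = v := by
  apply Subtype.ext
  rw [act_coe, glCLM_one]
  simp

lemma sig_mul (g h : GLd d) (v : Sph d) : sig (g * h) v = sig h v + sig g (act h v) := by
  have h1 := glCLM_pos h v
  have h2 := glCLM_pos g (act h v)
  unfold sig
  rw [← Real.log_mul h1.ne' h2.ne', glCLM_mul, act_coe]
  simp only [map_smul, norm_smul, norm_inv, norm_norm]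
  congr 1
  field_simp

lemma sig_one (v : Sph d) : sig 1 v = 0 := by
  simp [sig, glCLM_one]

lemma continuous_gv : Continuous (fun p : GLd d × Sph d => glCLM p.1 (p.2 : Ed d)) :=
  (continuous_glCLM.comp continuous_fst).clm_apply (continuous_subtype_val.comp continuous_snd)

lemma continuous_act : Continuous (fun p : GLd d × Sph d => act p.1 p.2) := by
  apply Continuous.subtype_mk
  exact (continuous_gv.norm.inv₀ (fun p => (glCLM_pos p.1 p.2).ne')).smul continuous_gv

lemma continuous_sig : Continuous (fun p : GLd d × Sph d => sig p.1 p.2) :=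
  continuous_gv.norm.log (fun p => (glCLM_pos p.1 p.2).ne')

/-- probability + compact support -/
structure Good (μ : Measure (GLd d)) : Prop where
  prob : IsProbabilityMeasure μ
  cs : CompactlySupported μ

lemma integrable_of_cs {Y : Type*} [TopologicalSpace Y] [MeasurableSpace Y] [OpensMeasurableSpace Y]
    [T2Space Y] {E : Type*} [NormedAddCommGroup E]
    {μ : Measure Y} [IsFiniteMeasure μ] {K : Set Y} (hK : IsCompact K) (hμ : μ Kᶜ = 0)
    {f : Y → E} (hf : Continuous f) : Integrable f μ := by
  have h := hf.continuousOn.integrableOn_compact (μ := μ) hK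
  rwa [IntegrableOn, Measure.restrict_eq_self_of_ae_mem (by exact hμ)] at h

lemma Good.integrable {E : Type*} [NormedAddCommGroup E]
    {μ : Measure (GLd d)} (hμ : Good μ) {f : GLd d → E} (hf : Continuous f) : Integrable f μ := by
  have := hμ.prob
  obtain ⟨K, hK, h0⟩ := hμ.cs
  exact integrable_of_cs hK h0 hf

lemma prod_cs {Y Z : Type*} [TopologicalSpace Y] [MeasurableSpace Y]
    [TopologicalSpace Z] [MeasurableSpace Z]
    {μ : Measure Y} {ν : Measure Z} [SFinite μ] [SFinite ν] {K : Set Y} {L : Set Z}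
    (hμ : μ Kᶜ = 0) (hν : ν Lᶜ = 0) : (μ.prod ν) (K ×ˢ L)ᶜ = 0 := by
  rw [Set.compl_prod_eq_union]
  refine measure_union_null ?_ ?_
  · rw [Measure.prod_prod, hμ, zero_mul]
  · rw [Measure.prod_prod, hν, mul_zero]

lemma continuous_integral_of_good {Y E : Type*} [TopologicalSpace Y] [FirstCountableTopology Y]
    [LocallyCompactSpace Y] [NormedAddCommGroup E] [NormedSpace ℝ E]
    {μ : Measure (GLd d)} (hμ : Good μ) {f : Y → GLd d → E}
    (hf : Continuous (Function.uncurry f)) : Continuous (fun y => ∫ g, f y g ∂μ) := by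
  have := hμ.prob
  obtain ⟨K, hK, h0⟩ := hμ.cs
  have := continuous_parametric_integral_of_continuous (μ := μ) hf hK
  rwa [Measure.restrict_eq_self_of_ae_mem (by exact h0)] at this

lemma Good.conv {μ ν : Measure (GLd d)} (hμ : Good μ) (hν : Good ν) : Good (mconv μ ν) := by
  have := hμ.prob
  have := hν.prob
  have hm : Measurable (fun p : GLd d × GLd d => p.1 * p.2) := measurable_mul
  refine ⟨Measure.isProbabilityMeasure_map hm.aemeasurable, ?_⟩
  obtain ⟨K, hK, h0⟩ := hμ.cs
  obtain ⟨L, hL, h1⟩ := hν.cs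
  have hc : IsCompact ((fun p : GLd d × GLd d => p.1 * p.2) '' (K ×ˢ L)) :=
    (hK.prod hL).image continuous_mul
  refine ⟨_, hc, ?_⟩
  rw [mconv, Measure.map_apply hm hc.measurableSet.compl]
  refine measure_mono_null ?_ (prod_cs h0 h1)
  rintro p hp hq
  exact hp ⟨p, hq, rfl⟩

lemma good_dirac : Good (Measure.dirac (1 : GLd d)) := by
  refine ⟨inferInstance, {1}, isCompact_singleton, ?_⟩
  simp

lemma Good.convN {μ : Measure (GLd d)} (hμ : Good μ) : ∀ n, Good (mconvN μ n)
  | 0 => good_dirac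
  | n + 1 => by
    rw [mconvN]
    split_ifs
    · exact hμ
    · exact (hμ.convN n).conv hμ

lemma mconvN_zero (μ : Measure (GLd d)) : mconvN μ 0 = Measure.dirac 1 := by
  rw [mconvN]

lemma mconvN_one (μ : Measure (GLd d)) : mconvN μ 1 = μ := by
  simp [mconvN]

lemma mconvN_succ {μ : Measure (GLd d)} (hμ : Good μ) (n : ℕ) :
    mconvN μ (n + 1) = mconv (mconvN μ n) μ := by
  have := hμ.prob
  rw [mconvN]
  split_ifs with h
  · subst h
    rw [mconvN_zero]
    exact (Measure.dirac_one_mconv μ).symm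
  · rfl

lemma mconvN_add {μ : Measure (GLd d)} (hμ : Good μ) (n m : ℕ) :
    mconvN μ (n + m) = mconv (mconvN μ n) (mconvN μ m) := by
  have := hμ.prob
  have : ∀ n, IsProbabilityMeasure (mconvN μ n) := fun n => (hμ.convN n).prob
  induction m with
  | zero => rw [mconvN_zero]; exact (Measure.mconv_dirac_one _).symm
  | succ m ih =>
    rw [← add_assoc, mconvN_succ hμ, ih, mconvN_succ hμ]
    exact Measure.mconv_assoc _ _ _

lemma integral_conv {E : Type*} [NormedAddCommGroup E] [NormedSpace ℝ E] [SecondCountableTopology E]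
    {μ ν : Measure (GLd d)} (hμ : Good μ) (hν : Good ν) {f : GLd d → E}
    (hf : Continuous f) : ∫ g, f g ∂(mconv μ ν) = ∫ h, ∫ g, f (g * h) ∂μ ∂ν := by
  have := hμ.prob
  have := hν.prob
  obtain ⟨K, hK, h0⟩ := hμ.cs
  obtain ⟨L, hL, h1⟩ := hν.cs
  rw [mconv, integral_map measurable_mul.aemeasurable hf.aestronglyMeasurable]
  rw [integral_prod_symm]
  exact integrable_of_cs (hK.prod hL) (prod_cs h0 h1) (hf.comp continuous_mul)

lemma integrable_conv_right {E : Type*} [NormedAddCommGroup E] [NormedSpace ℝ E]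
    {μ ν : Measure (GLd d)} (hμ : Good μ) (hν : Good ν) {f : GLd d → E}
    (hf : Continuous f) : Integrable (fun h => ∫ g, f (g * h) ∂μ) ν := by
  have := hμ.prob
  have := hν.prob
  obtain ⟨K, hK, h0⟩ := hμ.cs
  obtain ⟨L, hL, h1⟩ := hν.cs
  have h : Integrable (fun p : GLd d × GLd d => f (p.1 * p.2)) (μ.prod ν) :=
    integrable_of_cs (hK.prod hL) (prod_cs h0 h1) (hf.comp continuous_mul)
  exact h.integral_prod_right

lemma integral_convN_add {E : Type*} [NormedAddCommGroup E] [NormedSpace ℝ E]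
    [SecondCountableTopology E]
    {μ : Measure (GLd d)} (hμ : Good μ) (n m : ℕ) {f : GLd d → E}
    (hf : Continuous f) : ∫ g, f g ∂(mconvN μ (n + m)) =
      ∫ h, ∫ g, f (g * h) ∂(mconvN μ n) ∂(mconvN μ m) := by
  rw [mconvN_add hμ, integral_conv (hμ.convN n) (hμ.convN m) hf]

lemma integral_convN_succ {E : Type*} [NormedAddCommGroup E] [NormedSpace ℝ E]
    [SecondCountableTopology E]
    {μ : Measure (GLd d)} (hμ : Good μ) (n : ℕ) {f : GLd d → E}
    (hf : Continuous f) : ∫ g, f g ∂(mconvN μ (n + 1)) =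
      ∫ h, ∫ g, f (g * h) ∂(mconvN μ n) ∂μ := by
  rw [mconvN_succ hμ, integral_conv (hμ.convN n) hμ hf]

/-- a.e. property along convolution powers -/
lemma ae_convN {μ : Measure (GLd d)} (hμ : Good μ) {P : GLd d → Prop} (hm : MeasurableSet {g | P g})
    (h1 : P 1) (hmul : ∀ g h, P g → P h → P (g * h)) (hP : ∀ᵐ g ∂μ, P g) (n : ℕ) :
    ∀ᵐ g ∂(mconvN μ n), P g := by
  have := hμ.prob
  have : ∀ n, IsProbabilityMeasure (mconvN μ n) := fun n => (hμ.convN n).prob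
  induction n with
  | zero =>
    rw [mconvN_zero, ae_dirac_iff hm]
    exact h1
  | succ n ih =>
    rw [mconvN_succ hμ, mconv, ae_map_iff measurable_mul.aemeasurable hm]
    have h2 := Measure.quasiMeasurePreserving_fst (μ := mconvN μ n) (ν := μ) |>.ae ih
    have h3 := Measure.quasiMeasurePreserving_snd (μ := mconvN μ n) (ν := μ) |>.ae hP
    filter_upwards [h2, h3] with p hp hq using hmul _ _ hp hq

/-- Fekete's lemma for a subadditive observable. -/
lemma fekete {μ : Measure (GLd d)} (hμ : Good μ) {G : GLd d → ℝ} (hG : Continuous G)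
    (hsub : ∀ n, ∀ᵐ h ∂(mconvN μ n), ∀ g, G (g * h) ≤ G g + G h) {K : ℝ}
    (hlow : ∀ n : ℕ, -(K * n) ≤ ∫ g, G g ∂(mconvN μ n)) :
    ∃ l, Tendsto (fun n : ℕ => (n : ℝ)⁻¹ * ∫ g, G g ∂(mconvN μ n)) atTop (𝓝 l) := by
  have : ∀ n, IsProbabilityMeasure (mconvN μ n) := fun n => (hμ.convN n).prob
  have hs : Subadditive (fun n : ℕ => ∫ g, G g ∂(mconvN μ n)) := by
    intro m n
    dsimp only
    rw [integral_convN_add hμ m n hG]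
    calc ∫ h, ∫ g, G (g * h) ∂(mconvN μ m) ∂(mconvN μ n)
        ≤ ∫ h, ((∫ g, G g ∂(mconvN μ m)) + G h) ∂(mconvN μ n) := by
          apply integral_mono_ae
          · exact integrable_conv_right (hμ.convN m) (hμ.convN n) hG
          · exact (integrable_const _).add ((hμ.convN n).integrable hG)
          · filter_upwards [hsub n] with h hh
            calc ∫ g, G (g * h) ∂(mconvN μ m) ≤ ∫ g, (G g + G h) ∂(mconvN μ m) := by
                  apply integral_mono
                  · exact (hμ.convN m).integrable (hG.comp (continuous_mul_const h))
                  · exact ((hμ.convN m).integrable hG).add (integrable_const _)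
                  · exact fun g => hh g
              _ = _ := by
                  rw [integral_add ((hμ.convN m).integrable hG) (integrable_const _)]
                  simp
      _ = _ := by
          rw [integral_add (integrable_const _) ((hμ.convN n).integrable hG)]
          simp
  refine ⟨hs.lim, ?_⟩
  have := hs.tendsto_lim ⟨-|K|, ?_⟩
  · refine this.congr fun n => ?_
    rw [div_eq_inv_mul]
  · rintro _ ⟨n, rfl⟩
    dsimp only
    rcases Nat.eq_zero_or_pos n with rfl | hn
    · simp
    · have hn' : (0 : ℝ) < n := by exact_mod_cast hn
      rw [le_div_iff₀ hn']
      refine le_trans ?_ (hlow n)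
      nlinarith [le_abs_self K]

/-- The mean cocycle. -/
def Smean (μ : Measure (GLd d)) (n : ℕ) (v : Sph d) : ℝ := ∫ g, sig g v ∂(mconvN μ n)

lemma continuous_sig_left (v : Sph d) : Continuous (fun g => sig g v) := by
  have h : Continuous (fun g : GLd d => (g, v)) := by fun_prop
  simpa only [Function.comp_def] using continuous_sig.comp h

lemma continuous_act_left (v : Sph d) : Continuous (fun g => act g v) := by
  have h : Continuous (fun g : GLd d => (g, v)) := by fun_prop
  simpa only [Function.comp_def] using continuous_act.comp h

lemma continuous_act_right (g : GLd d) : Continuous (fun v => act g v) := by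
  have h : Continuous (fun v : Sph d => (g, v)) := by fun_prop
  simpa only [Function.comp_def] using continuous_act.comp h

lemma continuous_Smean {μ : Measure (GLd d)} (hμ : Good μ) (n : ℕ) : Continuous (Smean μ n) := by
  have h : Continuous (Function.uncurry fun (v : Sph d) (g : GLd d) => sig g v) := by
    simpa only [Function.comp_def, Function.uncurry_def, Prod.fst_swap, Prod.snd_swap] using continuous_sig.comp (continuous_swap (X := Sph d) (Y := GLd d))
  exact continuous_integral_of_good (hμ.convN n) h

lemma Smean_zero (μ : Measure (GLd d)) (v : Sph d) : Smean μ 0 v = 0 := by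
  rw [Smean, mconvN_zero, integral_dirac, sig_one]

lemma Smean_one (μ : Measure (GLd d)) (v : Sph d) : Smean μ 1 v = ∫ g, sig g v ∂μ := by
  rw [Smean, mconvN_one]

lemma Smean_add {μ : Measure (GLd d)} (hμ : Good μ) (n m : ℕ) (v : Sph d) :
    Smean μ (n + m) v = ∫ h, (sig h v + Smean μ n (act h v)) ∂(mconvN μ m) := by
  have : ∀ n, IsProbabilityMeasure (mconvN μ n) := fun n => (hμ.convN n).prob
  rw [Smean, integral_convN_add hμ n m (continuous_sig_left v)]
  congr 1
  ext h
  simp_rw [sig_mul]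
  rw [integral_add (integrable_const _) ((hμ.convN n).integrable (continuous_sig_left _))]
  simp [Smean]

lemma Smean_succ {μ : Measure (GLd d)} (hμ : Good μ) (n : ℕ) (v : Sph d) :
    Smean μ (n + 1) v = ∫ h, (sig h v + Smean μ n (act h v)) ∂μ := by
  rw [Smean_add hμ, mconvN_one]

lemma exists_sig_bound {S : Set (GLd d)} (hS : IsCompact S) :
    ∃ K : ℝ, 0 ≤ K ∧ ∀ h ∈ S, ∀ v : Sph d, |sig h v| ≤ K := by
  obtain ⟨C, hC⟩ := (hS.prod (isCompact_univ (X := Sph d))).exists_bound_of_continuousOn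
    (f := fun p : GLd d × Sph d => sig p.1 p.2) continuous_sig.continuousOn
  refine ⟨|C|, abs_nonneg _, fun h hh v => ?_⟩
  exact (hC (h, v) ⟨hh, trivial⟩).trans (le_abs_self C)

lemma Good.sig_bound {μ : Measure (GLd d)} (hμ : Good μ) :
    ∃ K : ℝ, 0 ≤ K ∧ ∀ᵐ h ∂μ, ∀ v : Sph d, |sig h v| ≤ K := by
  obtain ⟨S, hS, h0⟩ := hμ.cs
  obtain ⟨K, hK, h⟩ := exists_sig_bound hS
  refine ⟨K, hK, ?_⟩
  have : ∀ᵐ h ∂μ, h ∈ S := h0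
  filter_upwards [this] with g hg using h g hg

lemma continuous_Smean_act {μ : Measure (GLd d)} (hμ : Good μ) (n : ℕ) (v : Sph d) :
    Continuous (fun h => sig h v + Smean μ n (act h v)) :=
  (continuous_sig_left v).add ((continuous_Smean hμ n).comp (continuous_act_left v))

lemma Smean_lower {μ : Measure (GLd d)} (hμ : Good μ) {K : ℝ}
    (hK : ∀ᵐ h ∂μ, ∀ v : Sph d, |sig h v| ≤ K) (n : ℕ) (v : Sph d) :
    -(K * n) ≤ Smean μ n v := by
  have := hμ.prob
  induction n generalizing v with
  | zero => simp [Smean_zero]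
  | succ n ih =>
    rw [Smean_succ hμ]
    have : ∫ h, (-K + -(K * n)) ∂μ ≤ ∫ h, (sig h v + Smean μ n (act h v)) ∂μ := by
      apply integral_mono_ae (integrable_const _) (hμ.integrable (continuous_Smean_act hμ n v))
      filter_upwards [hK] with h hh
      have := (abs_le.1 (hh v)).1
      have := ih (act h v)
      linarith
    simp at this
    push_cast
    linarith

lemma Smean_upper {μ : Measure (GLd d)} (hμ : Good μ) {K : ℝ}
    (hK : ∀ᵐ h ∂μ, ∀ v : Sph d, |sig h v| ≤ K) (n : ℕ) (v : Sph d) :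
    Smean μ n v ≤ K * n := by
  have := hμ.prob
  induction n generalizing v with
  | zero => simp [Smean_zero]
  | succ n ih =>
    rw [Smean_succ hμ]
    have : ∫ h, (sig h v + Smean μ n (act h v)) ∂μ ≤ ∫ h, (K + (K * n)) ∂μ := by
      apply integral_mono_ae (hμ.integrable (continuous_Smean_act hμ n v)) (integrable_const _)
      filter_upwards [hK] with h hh
      have := (abs_le.1 (hh v)).2
      have := ih (act h v)
      linarith
    simp at this
    push_cast
    linarith

/-- Norm of the restriction. -/
def rnorm (V : Submodule ℝ (Ed d)) (g : GLd d) : ℝ :=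
  ‖LinearMap.toContinuousLinearMap ((glCLM g).toLinearMap.domRestrict V)‖

lemma rnorm_eq (V : Submodule ℝ (Ed d)) (g : GLd d) :
    rnorm V g = ‖(glCLM g).comp V.subtypeL‖ := rfl

lemma continuous_rnorm (V : Submodule ℝ (Ed d)) : Continuous (rnorm V) := by
  have h : Continuous (fun g : GLd d => (glCLM g).comp V.subtypeL) :=
    continuous_glCLM.clm_comp continuous_const
  have h2 : Continuous (fun T : V →L[ℝ] Ed d => ‖T‖) :=
    continuous_norm (E := V →L[ℝ] Ed d)
  exact h2.comp h

lemma rnorm_nonneg (V : Submodule ℝ (Ed d)) (g : GLd d) : 0 ≤ rnorm V g := by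
  rw [rnorm]
  exact ContinuousLinearMap.opNorm_nonneg _

lemma rnorm_apply_le (V : Submodule ℝ (Ed d)) (g : GLd d) {x : Ed d} (hx : x ∈ V) :
    ‖glCLM g x‖ ≤ rnorm V g * ‖x‖ := by
  have := ((glCLM g).comp V.subtypeL).le_opNorm ⟨x, hx⟩
  exact this

lemma rnorm_pos {V : Submodule ℝ (Ed d)} (hV : V ≠ ⊥) (g : GLd d) : 0 < rnorm V g := by
  obtain ⟨x, hx, hx0⟩ := V.exists_mem_ne_zero_of_ne_bot hV
  have h1 := rnorm_apply_le V g hx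
  have h2 : 0 < ‖glCLM g x‖ := norm_pos_iff.2 (glCLM_ne_zero g hx0)
  by_contra h
  push Not at h
  nlinarith [norm_nonneg x]

lemma rnorm_top (g : GLd d) : rnorm ⊤ g = gnorm g := by
  apply le_antisymm
  · refine ContinuousLinearMap.opNorm_le_bound _ (norm_nonneg _) fun x => ?_
    exact (glCLM g).le_opNorm x
  · refine ContinuousLinearMap.opNorm_le_bound _ (rnorm_nonneg _ _) fun x => ?_
    exact rnorm_apply_le ⊤ g trivial

lemma rnorm_mul_le {V : Submodule ℝ (Ed d)} (g h : GLd d) (hh : ∀ x ∈ V, glCLM h x ∈ V) :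
    rnorm V (g * h) ≤ rnorm V g * rnorm V h := by
  refine ContinuousLinearMap.opNorm_le_bound _ (mul_nonneg (rnorm_nonneg _ _) (rnorm_nonneg _ _))
    fun x => ?_
  have h1 : ‖glCLM (g * h) (x : Ed d)‖ ≤ rnorm V g * rnorm V h * ‖(x : Ed d)‖ := by
    rw [glCLM_mul]
    calc _ ≤ rnorm V g * ‖glCLM h (x : Ed d)‖ := rnorm_apply_le V g (hh _ x.2)
      _ ≤ rnorm V g * (rnorm V h * ‖(x : Ed d)‖) :=
        mul_le_mul_of_nonneg_left (rnorm_apply_le V h x.2) (rnorm_nonneg _ _)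
      _ = _ := by ring
  exact h1

lemma continuous_log_rnorm {V : Submodule ℝ (Ed d)} (hV : V ≠ ⊥) :
    Continuous (fun g => Real.log (rnorm V g)) :=
  (continuous_rnorm V).log fun g => (rnorm_pos hV g).ne'

lemma sig_le_log_rnorm {V : Submodule ℝ (Ed d)} (g : GLd d) (v : Sph d) (hv : (v : Ed d) ∈ V) :
    sig g v ≤ Real.log (rnorm V g) := by
  have := rnorm_apply_le V g hv
  rw [sph_norm, mul_one] at this
  exact Real.log_le_log (glCLM_pos g v) this

lemma exists_sph {V : Submodule ℝ (Ed d)} (hV : V ≠ ⊥) : ∃ v : Sph d, (v : Ed d) ∈ V := by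
  obtain ⟨x, hx, hx0⟩ := V.exists_mem_ne_zero_of_ne_bot hV
  have : ‖x‖ ≠ 0 := norm_ne_zero_iff.2 hx0
  refine ⟨⟨‖x‖⁻¹ • x, by simp [norm_smul, this]⟩, V.smul_mem _ hx⟩

lemma Smean_le_log_rnorm {μ : Measure (GLd d)} (hμ : Good μ) {V : Submodule ℝ (Ed d)} (hV : V ≠ ⊥)
    (v : Sph d) (hv : (v : Ed d) ∈ V) (n : ℕ) :
    Smean μ n v ≤ ∫ g, Real.log (rnorm V g) ∂(mconvN μ n) :=
  integral_mono ((hμ.convN n).integrable (continuous_sig_left v))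
    ((hμ.convN n).integrable (continuous_log_rnorm hV)) fun g => sig_le_log_rnorm g v hv

lemma tendsto_rest {μ : Measure (GLd d)} (hμ : Good μ) {V : Submodule ℝ (Ed d)} (hV : V ≠ ⊥)
    (hinv : ∀ᵐ g ∂μ, V.map (glCLM g).toLinearMap = V) :
    Tendsto (fun n : ℕ => (n : ℝ)⁻¹ * ∫ g, Real.log (rnorm V g) ∂(mconvN μ n)) atTop
      (𝓝 (L1rest μ V)) := by
  obtain ⟨K, hK0, hK⟩ := hμ.sig_bound
  obtain ⟨v, hv⟩ := exists_sph hV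
  have hP : ∀ n, ∀ᵐ g ∂(mconvN μ n), ∀ x ∈ V, glCLM g x ∈ V := by
    apply ae_convN hμ
    · have : {g : GLd d | ∀ x ∈ V, glCLM g x ∈ V} = ⋂ x ∈ V, {g | glCLM g x ∈ (V : Set (Ed d))} := by
        ext g; simp
      rw [this]
      apply IsClosed.measurableSet
      refine isClosed_biInter fun x _ => ?_
      exact V.closed_of_finiteDimensional.preimage (continuous_glCLM.clm_apply continuous_const)
    · intro x hx; rw [glCLM_one]; exact hx
    · intro g h hg hh x hx
      rw [glCLM_mul]
      exact hg _ (hh _ hx)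
    · filter_upwards [hinv] with g hg x hx
      rw [← hg]
      exact ⟨x, hx, rfl⟩
  obtain ⟨l, hl⟩ := fekete hμ (continuous_log_rnorm hV) (K := K) (fun n => by
    filter_upwards [hP n] with h hh g
    rw [← Real.log_mul (rnorm_pos hV g).ne' (rnorm_pos hV h).ne']
    exact Real.log_le_log (rnorm_pos hV _) (rnorm_mul_le g h hh))
    (fun n => (Smean_lower hμ hK n v).trans (Smean_le_log_rnorm hμ hV v hv n))
  have : L1rest μ V = l := hl.limUnder_eq
  rw [this]
  exact hl

lemma L1rest_top (μ : Measure (GLd d)) : L1rest μ ⊤ = L1 μ := by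
  have : ∀ g : GLd d, ‖LinearMap.toContinuousLinearMap
      ((glCLM g).toLinearMap.domRestrict ⊤)‖ = gnorm g := rnorm_top
  simp only [L1rest, L1, this]

lemma map_top_gl (g : GLd d) :
    (⊤ : Submodule ℝ (Ed d)).map (glCLM g).toLinearMap = ⊤ := by
  rw [Submodule.map_top, LinearMap.range_eq_top]
  exact LinearMap.injective_iff_surjective.1 (glLinear_injective g)

/-- Second moment. -/
def Wvar (μ : Measure (GLd d)) (l : ℝ) (n : ℕ) (v : Sph d) : ℝ :=
  ∫ g, (sig g v - n * l) ^ 2 ∂(mconvN μ n)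

lemma continuous_Wvar {μ : Measure (GLd d)} (hμ : Good μ) (l : ℝ) (n : ℕ) :
    Continuous (Wvar μ l n) := by
  have h : Continuous (Function.uncurry fun (v : Sph d) (g : GLd d) => (sig g v - n * l) ^ 2) := by
    have h0 : Continuous (Function.uncurry fun (v : Sph d) (g : GLd d) => sig g v) := by
      simpa only [Function.comp_def, Function.uncurry_def, Prod.fst_swap, Prod.snd_swap]
        using continuous_sig.comp (continuous_swap (X := Sph d) (Y := GLd d))
    exact (h0.sub continuous_const).pow 2
  exact continuous_integral_of_good (hμ.convN n) h

lemma Wvar_nonneg (μ : Measure (GLd d)) (l : ℝ) (n : ℕ) (v : Sph d) : 0 ≤ Wvar μ l n v :=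
  integral_nonneg fun _ => sq_nonneg _

lemma Wvar_succ_le {μ : Measure (GLd d)} (hμ : Good μ) {l K : ℝ}
    (hK : ∀ᵐ h ∂μ, ∀ v : Sph d, |sig h v - l| ≤ K) (n : ℕ) (v : Sph d) :
    Wvar μ l (n + 1) v ≤ ∫ h, (K ^ 2 + 2 * K * |Smean μ n (act h v) - n * l|
      + Wvar μ l n (act h v)) ∂μ := by
  have : ∀ n, IsProbabilityMeasure (mconvN μ n) := fun n => (hμ.convN n).prob
  have := hμ.prob
  have hc : Continuous (fun g : GLd d => (sig g v - (n + 1 : ℕ) * l) ^ 2) :=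
    ((continuous_sig_left v).sub continuous_const).pow 2
  rw [Wvar, integral_convN_succ hμ n hc]
  have hSc := (continuous_Smean hμ n).comp (continuous_act_left v)
  have hWc := (continuous_Wvar hμ l n).comp (continuous_act_left v)
  apply integral_mono_ae (integrable_conv_right (hμ.convN n) hμ hc)
  · apply hμ.integrable
    exact (continuous_const.add (continuous_const.mul (hSc.sub continuous_const).abs)).add hWc
  · filter_upwards [hK] with h hh
    have e : ∀ g, (sig (g * h) v - (n + 1 : ℕ) * l) ^ 2 = (sig h v - l) ^ 2
        + 2 * (sig h v - l) * (sig g (act h v) - n * l) + (sig g (act h v) - n * l) ^ 2 := by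
      intro g
      rw [sig_mul]
      push_cast
      ring
    simp_rw [e]
    have i0 : Integrable (fun g => sig g (act h v)) (mconvN μ n) :=
      (hμ.convN n).integrable (continuous_sig_left _)
    have i1 : Integrable (fun g => sig g (act h v) - n * l) (mconvN μ n) :=
      i0.sub (integrable_const _)
    have i2 : Integrable (fun g => (sig g (act h v) - n * l) ^ 2) (mconvN μ n) :=
      (hμ.convN n).integrable (((continuous_sig_left _).sub continuous_const).pow 2)
    have i3 : Integrable (fun g => (sig h v - l) ^ 2
        + 2 * (sig h v - l) * (sig g (act h v) - n * l)) (mconvN μ n) :=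
      (integrable_const _).add (i1.const_mul _)
    rw [integral_add i3 i2,
      integral_add (integrable_const _) (i1.const_mul _), integral_const_mul,
      integral_sub i0 (integrable_const _)]
    simp only [integral_const, probReal_univ, smul_eq_mul, one_mul]
    change (sig h v - l) ^ 2 + 2 * (sig h v - l) * (Smean μ n (act h v) - n * l)
      + Wvar μ l n (act h v) ≤ _
    have h1 := hh v
    have h2 : (sig h v - l) ^ 2 ≤ K ^ 2 := by
      rw [← sq_abs]; exact pow_le_pow_left₀ (abs_nonneg _) h1 2
    have h3 : (sig h v - l) * (Smean μ n (act h v) - n * l) ≤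
        K * |Smean μ n (act h v) - n * l| := by
      refine (le_abs_self _).trans ?_
      rw [abs_mul]
      exact mul_le_mul_of_nonneg_right h1 (abs_nonneg _)
    linarith

lemma abs_le_amgm (x : ℝ) {a : ℝ} (ha : 0 < a) : |x| ≤ a + x ^ 2 / a := by
  have : x ^ 2 / a = |x| * (|x| / a) := by rw [← sq_abs]; ring
  rcases le_total (|x|) a with h | h
  · have : 0 ≤ x ^ 2 / a := by positivity
    linarith
  · rw [this]
    have : 1 ≤ |x| / a := by rwa [one_le_div ha]
    nlinarith [abs_nonneg x]

lemma growth {μ : Measure (GLd d)} (hμ : Good μ) (A : Set (Sph d)) {V : Submodule ℝ (Ed d)}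
    (hV : V = Submodule.span ℝ ((fun v : Sph d => (v : Ed d)) '' A)) (hne : V ≠ ⊥) {l : ℝ}
    {ns : ℕ → ℕ} (hns : Tendsto ns atTop atTop)
    (hW : ∀ v ∈ A, Tendsto (fun k => Wvar μ l (ns k) v / (ns k : ℝ) ^ 2) atTop (𝓝 0)) {m : ℝ}
    (hm : Tendsto (fun n : ℕ => (n : ℝ)⁻¹ * ∫ g, Real.log (rnorm V g) ∂(mconvN μ n)) atTop (𝓝 m)) :
    m ≤ l := by
  have : ∀ n, IsProbabilityMeasure (mconvN μ n) := fun n => (hμ.convN n).prob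
  obtain ⟨b, hbA, hspan, hli⟩ := exists_linearIndependent ℝ ((fun v : Sph d => (v : Ed d)) '' A)
  have hV' : V = Submodule.span ℝ (Set.range (Subtype.val : b → Ed d)) := by
    rw [hV, ← hspan]; simp
  have hfin : Finite b := hli.finite
  have := Fintype.ofFinite b
  have hbs : ∀ i : b, ∃ v ∈ A, (v : Ed d) = i := fun i => hbA i.2
  choose w hwA hw using hbs
  obtain ⟨B, hB⟩ : ∃ B : Module.Basis b ℝ V, ∀ i, (B i : Ed d) = i := by
    subst hV'
    refine ⟨Module.Basis.span hli, fun i => ?_⟩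
    rw [Module.Basis.span_apply]
  obtain ⟨C, hC, hCB⟩ := B.exists_opNorm_le (F := Ed d)
  have key : ∀ (n : ℕ) (g : GLd d), Real.log (rnorm V g) ≤
      Real.log C + (n * l + ∑ i, |sig g (w i) - n * l|) := by
    intro n g
    set M := Real.exp (n * l + ∑ i, |sig g (w i) - n * l|) with hM
    have h1 : rnorm V g ≤ C * M := by
      apply hCB (Real.exp_nonneg _)
      intro i
      have e : (LinearMap.toContinuousLinearMap ((glCLM g).toLinearMap.domRestrict V)) (B i)
          = glCLM g (w i) := by
        rw [hw i, ← hB i]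
        rfl
      rw [e, ← Real.exp_log (glCLM_pos g (w i)), Real.exp_le_exp]
      have h2 : |sig g (w i) - n * l| ≤ ∑ i, |sig g (w i) - n * l| :=
        Finset.single_le_sum (f := fun i => |sig g (w i) - n * l|)
          (fun j _ => abs_nonneg _) (Finset.mem_univ i)
      have h3 := le_abs_self (sig g (w i) - n * l)
      change sig g (w i) ≤ _
      linarith
    have := Real.log_le_log (rnorm_pos hne g) h1
    rwa [Real.log_mul hC.ne' (Real.exp_pos _).ne', Real.log_exp] at this
  apply le_of_forall_pos_le_add
  intro ε hε
  set r : ℝ := (Fintype.card b : ℝ) + 1 with hr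
  have hr0 : 0 < r := by positivity
  set e := ε / r with he
  have he0 : 0 < e := by positivity
  have bound : ∀ n : ℕ, 0 < n → (n : ℝ)⁻¹ * ∫ g, Real.log (rnorm V g) ∂(mconvN μ n) ≤
      Real.log C * (n : ℝ)⁻¹ + l + ∑ i, (e + e⁻¹ * (Wvar μ l n (w i) / (n : ℝ) ^ 2)) := by
    intro n hn
    have hn' : (0 : ℝ) < n := by exact_mod_cast hn
    have iW : ∀ i, Integrable (fun g => (sig g (w i) - n * l) ^ 2) (mconvN μ n) := fun i =>
      (hμ.convN n).integrable (((continuous_sig_left _).sub continuous_const).pow 2)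
    have h1 : ∫ g, Real.log (rnorm V g) ∂(mconvN μ n) ≤
        ∫ g, ((Real.log C + n * l) + ∑ i, (e * n + (sig g (w i) - n * l) ^ 2 / (e * n)))
          ∂(mconvN μ n) := by
      apply integral_mono ((hμ.convN n).integrable (continuous_log_rnorm hne))
      · apply (integrable_const _).add
        apply integrable_finset_sum
        intro i _
        exact (integrable_const _).add ((iW i).div_const _)
      · intro g
        refine (key n g).trans ?_
        rw [← add_assoc]
        apply add_le_add_right
        apply Finset.sum_le_sum
        intro i _
        exact abs_le_amgm _ (by positivity)
    have iW2 : ∀ i, Integrable (fun g => e * n + (sig g (w i) - n * l) ^ 2 / (e * n))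
        (mconvN μ n) := fun i => (integrable_const _).add ((iW i).div_const _)
    rw [integral_add (integrable_const _) (integrable_finset_sum _ fun i _ => iW2 i),
      integral_finset_sum _ (fun i _ => iW2 i)] at h1
    have h2 : ∀ i, ∫ g, (e * n + (sig g (w i) - n * l) ^ 2 / (e * n)) ∂(mconvN μ n)
        = e * n + Wvar μ l n (w i) / (e * n) := by
      intro i
      rw [integral_add (integrable_const _) ((iW i).div_const _), integral_div]
      simp [Wvar]
    simp_rw [h2] at h1
    simp only [integral_const, probReal_univ, smul_eq_mul, one_mul] at h1
    have h3 := mul_le_mul_of_nonneg_left h1 (inv_nonneg.2 hn'.le)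
    refine h3.trans (le_of_eq ?_)
    rw [mul_add, Finset.mul_sum]
    congr 1
    · field_simp
    · refine Finset.sum_congr rfl fun i _ => ?_
      field_simp
  have hlim : Tendsto (fun k => Real.log C * ((ns k : ℕ) : ℝ)⁻¹ + l +
      ∑ i, (e + e⁻¹ * (Wvar μ l (ns k) (w i) / (ns k : ℝ) ^ 2))) atTop
      (𝓝 (Real.log C * 0 + l + ∑ i : b, (e + e⁻¹ * 0))) := by
    apply Tendsto.add
    · apply Tendsto.add _ tendsto_const_nhds
      exact (tendsto_inv_atTop_zero.comp (tendsto_natCast_atTop_atTop.comp hns)).const_mul _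
    · apply tendsto_finset_sum
      intro i _
      exact ((hW _ (hwA i)).const_mul _).const_add _
  have := le_of_tendsto_of_tendsto (hm.comp hns) hlim (by
    filter_upwards [hns.eventually_gt_atTop 0] with k hk using bound _ hk)
  refine this.trans ?_
  simp only [mul_zero, zero_add, add_zero, Finset.sum_const, Finset.card_univ, nsmul_eq_mul]
  have : (Fintype.card b : ℝ) * e ≤ r * e := by
    apply mul_le_mul_of_nonneg_right _ he0.le
    linarith
  have h4 : r * e = ε := by rw [he]; field_simp
  linarith

lemma exists_beta {μ : Measure (GLd d)} (hμ : Good μ) [Nonempty (Sph d)] :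
    ∃ (β : ℝ) (b : ℕ → ℝ) (vs : ℕ → Sph d), (∀ n v, b n ≤ Smean μ n v) ∧
      (∀ n, Smean μ n (vs n) = b n) ∧ (∀ n : ℕ, b n ≤ n * β) ∧
      Tendsto (fun n : ℕ => b n / n) atTop (𝓝 β) := by
  obtain ⟨K, hK0, hK⟩ := hμ.sig_bound
  have : ∀ n, IsProbabilityMeasure (mconvN μ n) := fun n => (hμ.convN n).prob
  have hmin : ∀ n, ∃ v, ∀ w, Smean μ n v ≤ Smean μ n w := by
    intro n
    obtain ⟨v, -, hv⟩ := isCompact_univ.exists_isMinOn (Set.univ_nonempty (α := Sph d))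
      (continuous_Smean hμ n).continuousOn
    exact ⟨v, fun w => hv (Set.mem_univ w)⟩
  choose vs hvs using hmin
  have hsub : Subadditive (fun n => -Smean μ n (vs n)) := by
    intro m n
    dsimp only
    rw [Smean_add hμ m n]
    have h1 : ∫ h, (sig h (vs (m + n)) + Smean μ m (vs m)) ∂(mconvN μ n) ≤
        ∫ h, (sig h (vs (m + n)) + Smean μ m (act h (vs (m + n)))) ∂(mconvN μ n) := by
      apply integral_mono
      · exact ((hμ.convN n).integrable (continuous_sig_left _)).add (integrable_const _)
      · exact (hμ.convN n).integrable (continuous_Smean_act hμ m _)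
      · intro h
        exact add_le_add_right (hvs m _) _
    rw [integral_add ((hμ.convN n).integrable (continuous_sig_left _)) (integrable_const _)] at h1
    simp only [integral_const, probReal_univ, smul_eq_mul, one_mul] at h1
    have h2 : Smean μ n (vs n) ≤ ∫ h, sig h (vs (m + n)) ∂(mconvN μ n) := hvs n _
    linarith
  have hbdd : BddBelow (Set.range fun n : ℕ => -Smean μ n (vs n) / n) := by
    refine ⟨-K, ?_⟩
    rintro _ ⟨n, rfl⟩
    dsimp only
    rcases Nat.eq_zero_or_pos n with rfl | hn
    · simpa using hK0
    · have hn' : (0 : ℝ) < n := by exact_mod_cast hn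
      rw [le_div_iff₀ hn']
      have := Smean_upper hμ hK n (vs n)
      linarith
  refine ⟨-hsub.lim, fun n => Smean μ n (vs n), vs, hvs, fun _ => rfl, ?_, ?_⟩
  · intro n
    rcases Nat.eq_zero_or_pos n with rfl | hn
    · simp [Smean_zero]
    · have hn' : (0 : ℝ) < n := by exact_mod_cast hn
      have := hsub.lim_le_div hbdd hn.ne'
      rw [le_div_iff₀ hn'] at this
      linarith
  · have := (hsub.tendsto_lim hbdd).neg
    refine this.congr fun n => ?_
    ring

/-- averaged observable -/
def Pavg (μ : Measure (GLd d)) (k : ℕ) (f : Sph d → ℝ) (v : Sph d) : ℝ :=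
  ∫ g, f (act g v) ∂(mconvN μ k)

lemma continuous_uncurry_act {E : Type*} [TopologicalSpace E] {f : Sph d → E} (hf : Continuous f) :
    Continuous (Function.uncurry fun (v : Sph d) (g : GLd d) => f (act g v)) := by
  have h0 : Continuous (Function.uncurry fun (v : Sph d) (g : GLd d) => act g v) := by
    simpa only [Function.comp_def, Function.uncurry_def, Prod.fst_swap, Prod.snd_swap]
      using continuous_act.comp (continuous_swap (X := Sph d) (Y := GLd d))
  exact hf.comp h0

lemma continuous_Pavg {μ : Measure (GLd d)} (hμ : Good μ) (k : ℕ) {f : Sph d → ℝ}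
    (hf : Continuous f) : Continuous (Pavg μ k f) :=
  continuous_integral_of_good (hμ.convN k) (continuous_uncurry_act hf)

lemma Pavg_succ {μ : Measure (GLd d)} (hμ : Good μ) (k : ℕ) {f : Sph d → ℝ}
    (hf : Continuous f) (v : Sph d) : Pavg μ (k + 1) f v = Pavg μ k (Pavg μ 1 f) v := by
  have hc : Continuous (fun g => f (act g v)) := hf.comp (continuous_act_left v)
  rw [Pavg, add_comm, integral_convN_add hμ 1 k hc]
  simp only [Pavg, act_mul]

lemma Smean_eq_sum {μ : Measure (GLd d)} (hμ : Good μ) (n : ℕ) (v : Sph d) :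
    ∑ k ∈ Finset.range n, Pavg μ k (Smean μ 1) v = Smean μ n v := by
  induction n with
  | zero => simp [Smean_zero]
  | succ n ih =>
    rw [Finset.sum_range_succ, ih, add_comm n 1, Smean_add hμ, integral_add]
    · rfl
    · exact (hμ.convN n).integrable (continuous_sig_left v)
    · exact (hμ.convN n).integrable ((continuous_Smean hμ 1).comp (continuous_act_left v))

/-- empirical measures -/
def emp (μ : Measure (GLd d)) (v : Sph d) (n : ℕ) : Measure (Sph d) :=
  ((n : ENNReal) + 1)⁻¹ • ∑ k ∈ Finset.range (n + 1), (mconvN μ k).map (fun g => act g v)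

lemma emp_prob {μ : Measure (GLd d)} (hμ : Good μ) (v : Sph d) (n : ℕ) :
    IsProbabilityMeasure (emp μ v n) := by
  have : ∀ n, IsProbabilityMeasure (mconvN μ n) := fun n => (hμ.convN n).prob
  constructor
  rw [emp, Measure.smul_apply, Measure.finset_sum_apply]
  have : ∀ k, ((mconvN μ k).map (fun g => act g v)) Set.univ = 1 := by
    intro k
    rw [Measure.map_apply (continuous_act_left v).measurable MeasurableSet.univ]
    simp
  simp only [this]
  simp only [Finset.sum_const, Finset.card_range, nsmul_eq_mul, mul_one, smul_eq_mul]
  push_cast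
  exact ENNReal.inv_mul_cancel (by simp) (by simp)

lemma integral_emp {μ : Measure (GLd d)} (hμ : Good μ) (v : Sph d) (n : ℕ) {f : Sph d → ℝ}
    (hf : Continuous f) : ∫ x, f x ∂(emp μ v n) =
      ((n : ℝ) + 1)⁻¹ * ∑ k ∈ Finset.range (n + 1), Pavg μ k f v := by
  have hp : ∀ n, IsProbabilityMeasure (mconvN μ n) := fun n => (hμ.convN n).prob
  have hm := (continuous_act_left v).measurable
  have hp2 : ∀ k, IsProbabilityMeasure ((mconvN μ k).map (fun g => act g v)) := fun k =>
    Measure.isProbabilityMeasure_map hm.aemeasurable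
  rw [emp, integral_smul_measure, integral_finset_sum_measure]
  · simp only [smul_eq_mul]
    congr 1
    · rw [ENNReal.toReal_inv]
      congr 1
    · refine Finset.sum_congr rfl fun k _ => ?_
      rw [integral_map hm.aemeasurable hf.aestronglyMeasurable]
      rfl
  · intro k _
    exact integrable_of_cs isCompact_univ (by simp) hf

lemma exists_stat {μ : Measure (GLd d)} (hμ : Good μ) {β : ℝ} {vs : ℕ → Sph d}
    (hβ : Tendsto (fun n : ℕ => Smean μ n (vs n) / n) atTop (𝓝 β)) :
    ∃ η : Measure (Sph d), IsProbabilityMeasure η ∧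
      (∀ f : Sph d → ℝ, Continuous f → ∫ v, ∫ g, f (act g v) ∂μ ∂η = ∫ v, f v ∂η) ∧
      ∫ v, Smean μ 1 v ∂η = β := by
  have hp : ∀ n, IsProbabilityMeasure (mconvN μ n) := fun n => (hμ.convN n).prob
  let e : ℕ → ProbabilityMeasure (Sph d) := fun n => ⟨emp μ (vs (n + 1)) n, emp_prob hμ _ _⟩
  let U : Ultrafilter ℕ := hyperfilter ℕ
  have hU : (U : Filter ℕ) ≤ atTop := by
    rw [← Nat.cofinite_eq_atTop]; exact hyperfilter_le_cofinite
  obtain ⟨η, hη⟩ : ∃ η, Tendsto e U (𝓝 η) := ⟨_, (U.map e).le_nhds_lim⟩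
  rw [ProbabilityMeasure.tendsto_iff_forall_integral_tendsto] at hη
  have hη' : ∀ f : Sph d → ℝ, Continuous f →
      Tendsto (fun n : ℕ => ((n : ℝ) + 1)⁻¹ * ∑ k ∈ Finset.range (n + 1), Pavg μ k f (vs (n + 1)))
        U (𝓝 (∫ v, f v ∂(η : Measure (Sph d)))) := by
    intro f hf
    have := hη (BoundedContinuousFunction.mkOfCompact ⟨f, hf⟩)
    refine this.congr fun n => ?_
    exact integral_emp hμ _ n hf
  refine ⟨η, inferInstance, fun f hf => ?_, ?_⟩
  · have hQ : Continuous (Pavg μ 1 f) := continuous_Pavg hμ 1 hf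
    have e1 : ∀ v, Pavg μ 1 f v = ∫ g, f (act g v) ∂μ := fun v => by rw [Pavg, mconvN_one]
    simp only [← e1]
    have h1 := (hη' _ hQ).sub (hη' f hf)
    have h2 : Tendsto (fun n : ℕ => ((n : ℝ) + 1)⁻¹ *
        (Pavg μ (n + 1) f (vs (n + 1)) - Pavg μ 0 f (vs (n + 1)))) atTop (𝓝 0) := by
      obtain ⟨C, hC⟩ := isCompact_univ.exists_bound_of_continuousOn (f := f) hf.continuousOn
      have hb : ∀ k v, ‖Pavg μ k f v‖ ≤ C := fun k v => by
        have := norm_integral_le_of_norm_le_const (μ := mconvN μ k) (f := fun g => f (act g v))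
          (C := C) (Eventually.of_forall fun g => hC _ trivial)
        rw [Pavg]
        simpa using this
      have hz : Tendsto (fun n : ℕ => ((n : ℝ) + 1)⁻¹) atTop (𝓝 0) := by
        simpa using tendsto_one_div_add_atTop_nhds_zero_nat (𝕜 := ℝ)
      refine hz.zero_mul_isBoundedUnder_le ?_
      refine isBoundedUnder_of ⟨C + C, fun n => ?_⟩
      exact (norm_sub_le _ _).trans (add_le_add (hb _ _) (hb _ _))
    have h3 : Tendsto (fun n : ℕ => ((n : ℝ) + 1)⁻¹ *
        (Pavg μ (n + 1) f (vs (n + 1)) - Pavg μ 0 f (vs (n + 1)))) U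
        (𝓝 (∫ v, Pavg μ 1 f v ∂(η : Measure (Sph d)) - ∫ v, f v ∂(η : Measure (Sph d)))) := by
      refine h1.congr fun n => ?_
      rw [← mul_sub, ← Finset.sum_sub_distrib]
      congr 1
      rw [← Finset.sum_range_sub (fun k => Pavg μ k f (vs (n + 1)))]
      refine Finset.sum_congr rfl fun k _ => ?_
      rw [Pavg_succ hμ k hf]
    have := tendsto_nhds_unique h3 (h2.mono_left hU)
    linarith
  · have h1 := hη' _ (continuous_Smean hμ 1)
    have h2 := (hβ.comp (tendsto_add_atTop_nat 1)).mono_left hU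
    refine tendsto_nhds_unique h1 (h2.congr fun n => ?_)
    simp only [Function.comp]
    rw [Smean_eq_sum hμ, div_eq_inv_mul]
    push_cast
    rfl

/-- stationarity on the sphere -/
def StatS (μ : Measure (GLd d)) (η : Measure (Sph d)) : Prop :=
  ∀ f : Sph d → ℝ, Continuous f → ∫ v, ∫ g, f (act g v) ∂μ ∂η = ∫ v, f v ∂η

lemma integrable_sph {E : Type*} [NormedAddCommGroup E] {η : Measure (Sph d)} [IsFiniteMeasure η]
    {f : Sph d → E}
    (hf : Continuous f) : Integrable f η :=
  integrable_of_cs isCompact_univ (by simp) hf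

lemma continuous_Qf {μ : Measure (GLd d)} (hμ : Good μ) {f : Sph d → ℝ}
    (hf : Continuous f) : Continuous (fun v => ∫ g, f (act g v) ∂μ) :=
  continuous_integral_of_good hμ (continuous_uncurry_act hf)

lemma Smean_succ' {μ : Measure (GLd d)} (hμ : Good μ) (n : ℕ) (v : Sph d) :
    Smean μ (n + 1) v = Smean μ 1 v + ∫ h, Smean μ n (act h v) ∂μ := by
  rw [Smean_succ hμ, Smean_one, integral_add]
  · exact hμ.integrable (continuous_sig_left v)
  · exact hμ.integrable ((continuous_Smean hμ n).comp (continuous_act_left v))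

lemma stat_Smean {μ : Measure (GLd d)} (hμ : Good μ) {η : Measure (Sph d)} [IsProbabilityMeasure η]
    (hη : StatS μ η) (n : ℕ) : ∫ v, Smean μ n v ∂η = n * ∫ v, Smean μ 1 v ∂η := by
  induction n with
  | zero => simp [Smean_zero]
  | succ n ih =>
    simp_rw [Smean_succ' hμ n]
    rw [integral_add (integrable_sph (continuous_Smean hμ 1))
      (integrable_sph (continuous_Qf hμ (continuous_Smean hμ n))),
      hη _ (continuous_Smean hμ n), ih]
    push_cast
    ring

lemma stat_abs {μ : Measure (GLd d)} (hμ : Good μ) {η : Measure (Sph d)} [IsProbabilityMeasure η]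
    (hη : StatS μ η) {β : ℝ} (hβ : ∫ v, Smean μ 1 v ∂η = β) {n : ℕ} {b : ℝ}
    (hb : ∀ v, b ≤ Smean μ n v) :
    ∫ v, |Smean μ n v - n * β| ∂η ≤ 2 * (n * β - b) := by
  have hc := continuous_Smean hμ n
  have h0 : b ≤ n * β := by
    rw [← hβ, ← stat_Smean hμ hη]
    have := integral_mono (μ := η) (integrable_const b) (integrable_sph hc) hb
    simpa using this
  have h1 : ∫ v, |Smean μ n v - n * β| ∂η ≤ ∫ v, (Smean μ n v + (n * β - 2 * b)) ∂η := by
    apply integral_mono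
    · exact integrable_sph (hc.sub continuous_const).abs
    · exact integrable_sph (hc.add continuous_const)
    · intro v
      dsimp only
      rw [abs_le]
      constructor <;> linarith [hb v]
  rw [integral_add (integrable_sph hc) (integrable_const _), stat_Smean hμ hη, hβ] at h1
  simp only [integral_const, probReal_univ, smul_eq_mul, one_mul] at h1
  linarith

lemma stat_Wvar_succ {μ : Measure (GLd d)} (hμ : Good μ) {η : Measure (Sph d)}
    [IsProbabilityMeasure η]
    (hη : StatS μ η) {β K : ℝ} (hK0 : 0 ≤ K) (hK : ∀ᵐ h ∂μ, ∀ v : Sph d, |sig h v - β| ≤ K)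
    (hβ : ∫ v, Smean μ 1 v ∂η = β) {n : ℕ} {b : ℝ}
    (hb : ∀ v, b ≤ Smean μ n v) :
    ∫ v, Wvar μ β (n + 1) v ∂η ≤ (K ^ 2 + 4 * K * (n * β - b)) + ∫ v, Wvar μ β n v ∂η := by
  have hc := continuous_Smean hμ n
  have hw := continuous_Wvar hμ β n
  have hc1 : Continuous (fun v => |Smean μ n v - n * β|) := (hc.sub continuous_const).abs
  have hF : Continuous (fun v => K ^ 2 + 2 * K * |Smean μ n v - n * β| + Wvar μ β n v) :=
    (continuous_const.add (continuous_const.mul hc1)).add hw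
  have h1 := integral_mono (μ := η) (integrable_sph (continuous_Wvar hμ β (n + 1)))
    (integrable_sph (continuous_Qf hμ hF)) (Wvar_succ_le hμ hK n)
  have h2 := hη _ hF
  rw [h2] at h1
  have i1 : Integrable (fun v => 2 * K * |Smean μ n v - n * β|) η :=
    integrable_sph (continuous_const.mul hc1)
  have i2 : Integrable (fun v => K ^ 2 + 2 * K * |Smean μ n v - n * β|) η :=
    (integrable_const _).add i1
  rw [integral_add i2
    (integrable_sph hw), integral_add (integrable_const _) i1, integral_const_mul] at h1
  simp only [integral_const, probReal_univ, smul_eq_mul, one_mul] at h1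
  have h3 := stat_abs hμ hη hβ hb
  have := mul_le_mul_of_nonneg_left h3 (by positivity : 0 ≤ 2 * K)
  linarith

lemma cesaro_sq {u : ℕ → ℝ} (hu0 : ∀ k, 0 ≤ u k)
    (hu : Tendsto (fun k : ℕ => u k / k) atTop (𝓝 0)) :
    Tendsto (fun n : ℕ => (∑ k ∈ Finset.range n, u k) / (n : ℝ) ^ 2) atTop (𝓝 0) := by
  have h1 : Tendsto (fun k : ℕ => u k / (k + 1)) atTop (𝓝 0) := by
    refine squeeze_zero' (Eventually.of_forall fun k => div_nonneg (hu0 k) (by positivity)) ?_ hu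
    filter_upwards [eventually_gt_atTop 0] with k hk
    have : (0 : ℝ) < k := by exact_mod_cast hk
    exact div_le_div_of_nonneg_left (hu0 k) this (by linarith)
  refine squeeze_zero' (Eventually.of_forall fun n => div_nonneg
    (Finset.sum_nonneg fun k _ => hu0 k) (by positivity)) ?_ h1.cesaro
  filter_upwards [eventually_gt_atTop 0] with n hn
  have hn' : (0 : ℝ) < n := by exact_mod_cast hn
  rw [div_le_iff₀ (by positivity), sq, inv_mul_eq_div, div_mul_eq_mul_div, mul_comm, mul_assoc,
    mul_div_assoc, mul_div_cancel_left₀ _ hn'.ne', Finset.mul_sum]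
  refine Finset.sum_le_sum fun k hk => ?_
  have : (k : ℝ) + 1 ≤ n := by exact_mod_cast Finset.mem_range.1 hk
  rw [mul_div_assoc', le_div_iff₀ (by positivity), mul_comm]
  exact mul_le_mul_of_nonneg_right this (hu0 k)

lemma stat_Wvar_tendsto {μ : Measure (GLd d)} (hμ : Good μ) {η : Measure (Sph d)}
    [IsProbabilityMeasure η]
    (hη : StatS μ η) {β : ℝ} (hβ : ∫ v, Smean μ 1 v ∂η = β) {b : ℕ → ℝ}
    (hb : ∀ n v, b n ≤ Smean μ n v) (hbβ : ∀ n : ℕ, b n ≤ n * β)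
    (hbt : Tendsto (fun n : ℕ => b n / n) atTop (𝓝 β)) :
    Tendsto (fun n : ℕ => (∫ v, Wvar μ β n v ∂η) / (n : ℝ) ^ 2) atTop (𝓝 0) := by
  obtain ⟨K', hK0', hK'⟩ := hμ.sig_bound
  obtain ⟨K, hK0, hK⟩ : ∃ K : ℝ, 0 ≤ K ∧ ∀ᵐ h ∂μ, ∀ v : Sph d, |sig h v - β| ≤ K := by
    refine ⟨K' + |β|, by positivity, ?_⟩
    filter_upwards [hK'] with h hh v
    exact (abs_sub _ _).trans (by linarith [hh v])
  have h1 : ∀ n : ℕ, ∫ v, Wvar μ β n v ∂η ≤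
      ∑ k ∈ Finset.range n, (K ^ 2 + 4 * K * (k * β - b k)) := by
    intro n
    induction n with
    | zero =>
      have : ∀ v : Sph d, Wvar μ β 0 v = 0 := fun v => by
        rw [Wvar, mconvN_zero, integral_dirac, sig_one]; simp
      simp [this]
    | succ n ih =>
      rw [Finset.sum_range_succ]
      have := stat_Wvar_succ hμ hη hK0 hK hβ (hb n)
      linarith
  have hu : Tendsto (fun k : ℕ => (K ^ 2 + 4 * K * (k * β - b k)) / (k : ℝ)) atTop (𝓝 0) := by
    have e1 : Tendsto (fun k : ℕ => K ^ 2 / (k : ℝ)) atTop (𝓝 0) :=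
      tendsto_const_div_atTop_nhds_zero_nat _
    have e2 := e1.add ((tendsto_const_nhds (x := β).sub hbt).const_mul (4 * K))
    simp only [sub_self, mul_zero, add_zero] at e2
    refine e2.congr' ?_
    filter_upwards [eventually_gt_atTop 0] with n hn
    have hn' : (0 : ℝ) < n := by exact_mod_cast hn
    field_simp
  have h2 := cesaro_sq (fun k => by
    have : 0 ≤ (k : ℝ) * β - b k := by linarith [hbβ k]
    positivity) hu
  refine squeeze_zero (fun n => div_nonneg (integral_nonneg fun v => Wvar_nonneg _ _ _ _)
    (by positivity)) (fun n => ?_) h2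
  exact div_le_div_of_nonneg_right (h1 n) (by positivity)

lemma stat_subseq {μ : Measure (GLd d)} (hμ : Good μ) {η : Measure (Sph d)}
    [IsProbabilityMeasure η] {β : ℝ}
    (h : Tendsto (fun n : ℕ => (∫ v, Wvar μ β n v ∂η) / (n : ℝ) ^ 2) atTop (𝓝 0)) :
    ∃ ns : ℕ → ℕ, Tendsto ns atTop atTop ∧
      ∀ᵐ v ∂η, Tendsto (fun k => Wvar μ β (ns k) v / (ns k : ℝ) ^ 2) atTop (𝓝 0) := by
  have hc : ∀ n : ℕ, Continuous (fun v => Wvar μ β n v / (n : ℝ) ^ 2) := fun n =>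
    (continuous_Wvar hμ β n).div_const _
  have hm : TendstoInMeasure η (fun (n : ℕ) v => Wvar μ β n v / (n : ℝ) ^ 2) atTop
      (fun _ => (0 : ℝ)) := by
    apply tendstoInMeasure_of_tendsto_eLpNorm (p := 1) one_ne_zero
    · intro n; exact (hc n).aestronglyMeasurable
    · exact aestronglyMeasurable_const
    · have h3 : ∀ n : ℕ, eLpNorm ((fun v => Wvar μ β n v / (n : ℝ) ^ 2) - fun _ => (0 : ℝ)) 1 η =
          ENNReal.ofReal ((∫ v, Wvar μ β n v ∂η) / (n : ℝ) ^ 2) := by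
        intro n
        have : ((fun v => Wvar μ β n v / (n : ℝ) ^ 2) - fun _ => (0 : ℝ)) =
            fun v => Wvar μ β n v / (n : ℝ) ^ 2 := by ext v; simp
        rw [this, eLpNorm_one_eq_lintegral_enorm, ← integral_div,
          ofReal_integral_eq_lintegral_ofReal (integrable_sph (hc n))
            (Eventually.of_forall fun v => div_nonneg (Wvar_nonneg _ _ _ _) (by positivity))]
        refine lintegral_congr fun v => ?_
        rw [Real.enorm_eq_ofReal (div_nonneg (Wvar_nonneg _ _ _ _) (by positivity))]
      simp only [h3]
      simpa using ENNReal.tendsto_ofReal h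
  obtain ⟨ns, hns, hae⟩ := hm.exists_seq_tendsto_ae
  exact ⟨ns, hns.tendsto_atTop, hae⟩

lemma stat_map {μ : Measure (GLd d)} (hμ : Good μ) {η : Measure (Sph d)}
    [IsProbabilityMeasure η] (hη : StatS μ η) :
    (μ.prod η).map (fun p : GLd d × Sph d => act p.1 p.2) = η := by
  have := hμ.prob
  have hm : Measurable (fun p : GLd d × Sph d => act p.1 p.2) := continuous_act.measurable
  have : IsProbabilityMeasure ((μ.prod η).map (fun p : GLd d × Sph d => act p.1 p.2)) :=
    Measure.isProbabilityMeasure_map hm.aemeasurable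
  apply ext_of_forall_integral_eq_of_IsFiniteMeasure
  intro f
  have hf : Continuous f := f.continuous
  rw [integral_map hm.aemeasurable hf.aestronglyMeasurable, ← hη f hf]
  obtain ⟨S, hS, h0⟩ := hμ.cs
  have hi : Integrable (fun p : GLd d × Sph d => f (act p.1 p.2)) (μ.prod η) := by
    refine integrable_of_cs (hS.prod (isCompact_univ (X := Sph d))) (prod_cs h0 (by simp)) ?_
    have := hf.comp (continuous_act (d := d))
    simpa only [Function.comp_def] using this
  rw [integral_prod_symm _ hi]

lemma exists_minV {η : Measure (Sph d)} [IsProbabilityMeasure η] :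
    ∃ V : Submodule ℝ (Ed d), (∀ᵐ v : Sph d ∂η, (v : Ed d) ∈ V) ∧
      ∀ W : Submodule ℝ (Ed d), (∀ᵐ v : Sph d ∂η, (v : Ed d) ∈ W) → V ≤ W := by
  classical
  let P : ℕ → Prop := fun n => ∃ V : Submodule ℝ (Ed d), (∀ᵐ v : Sph d ∂η, (v : Ed d) ∈ V) ∧
    Module.finrank ℝ V = n
  have hP : ∃ n, P n := ⟨_, ⊤, by simp, rfl⟩
  obtain ⟨V, hV, hn⟩ := Nat.find_spec hP
  refine ⟨V, hV, fun W hW => ?_⟩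
  have h1 : ∀ᵐ v : Sph d ∂η, (v : Ed d) ∈ V ⊓ W := by
    filter_upwards [hV, hW] with v h1 h2 using ⟨h1, h2⟩
  have h2 : Nat.find hP ≤ Module.finrank ℝ (V ⊓ W : Submodule ℝ (Ed d)) :=
    Nat.find_min' hP ⟨_, h1, rfl⟩
  have h3 : V ⊓ W = V := Submodule.eq_of_le_of_finrank_le inf_le_left (hn ▸ h2)
  exact inf_eq_left.1 h3

lemma partA {μ : Measure (GLd d)} (hμ : Good μ) (hd : 0 < d) (hq : QuasiIrreducible μ) :
    ∃ b : ℕ → ℝ, (∀ n v, b n ≤ Smean μ n v) ∧ ∃ β, L1 μ ≤ β ∧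
      Tendsto (fun n : ℕ => b n / n) atTop (𝓝 β) := by
  have := hμ.prob
  have : Nontrivial (Ed d) := by
    have : Nonempty (Fin d) := ⟨⟨0, hd⟩⟩
    infer_instance
  have hne : Nonempty (Sph d) := (exists_sph (d := d) (V := ⊤) top_ne_bot).nonempty
  obtain ⟨β, b, vs, hb, hvs, hbβ, hbt⟩ := exists_beta hμ
  refine ⟨b, hb, β, ?_, hbt⟩
  obtain ⟨η, hp, hη, hβ⟩ := exists_stat hμ (β := β) (vs := vs) (by simpa only [hvs] using hbt)
  obtain ⟨ns, hns, hae⟩ := stat_subseq hμ (stat_Wvar_tendsto hμ hη hβ hb hbβ hbt)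
  obtain ⟨V, hV, hmin⟩ := exists_minV (η := η)
  have hVm : ∀ W : Submodule ℝ (Ed d), MeasurableSet {v : Sph d | (v : Ed d) ∈ W} := fun W =>
    (W.closed_of_finiteDimensional.preimage continuous_subtype_val).measurableSet
  have hVne : V ≠ ⊥ := by
    rintro rfl
    obtain ⟨v, hv⟩ := hV.exists
    exact sph_ne v (by simpa using hv)
  have hinv : ∀ᵐ g ∂μ, V.map (glCLM g).toLinearMap = V := by
    have hm : Measurable (fun p : GLd d × Sph d => act p.1 p.2) := continuous_act.measurable
    have h1 : ∀ᵐ p ∂(μ.prod η), ((act p.1 p.2 : Sph d) : Ed d) ∈ V := by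
      rw [← stat_map hμ hη] at hV
      exact (ae_map_iff hm.aemeasurable (hVm V)).1 hV
    have h2 := Measure.ae_ae_of_ae_prod h1
    filter_upwards [h2] with g hg
    have h3 : V ≤ V.comap (glCLM g).toLinearMap := by
      apply hmin
      filter_upwards [hg] with v hv
      have h4 : glCLM g (v : Ed d) = ‖glCLM g v‖ • ((act g v : Sph d) : Ed d) := by
        rw [act_coe, smul_smul, mul_inv_cancel₀ (glCLM_pos g v).ne', one_smul]
      change glCLM g (v : Ed d) ∈ V
      rw [h4]
      exact V.smul_mem _ hv
    refine Submodule.eq_of_le_of_finrank_le (Submodule.map_le_iff_le_comap.2 h3) ?_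
    exact (Submodule.equivMapOfInjective _ (glLinear_injective g) V).finrank_eq.le
  let A : Set (Sph d) := {v | (v : Ed d) ∈ V ∧
    Tendsto (fun k => Wvar μ β (ns k) v / (ns k : ℝ) ^ 2) atTop (𝓝 0)}
  have hspan : V = Submodule.span ℝ ((fun v : Sph d => (v : Ed d)) '' A) := by
    apply le_antisymm
    · apply hmin
      filter_upwards [hV, hae] with v h1 h2
      exact Submodule.subset_span ⟨v, ⟨h1, h2⟩, rfl⟩
    · rw [Submodule.span_le]
      rintro _ ⟨v, hv, rfl⟩
      exact hv.1
  have hle : L1rest μ V ≤ β :=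
    growth hμ A hspan hVne hns (fun v hv => hv.2) (tendsto_rest hμ hVne hinv)
  by_cases hT : V = ⊤
  · rw [hT, L1rest_top] at hle
    exact hle
  · by_contra hlt
    push Not at hlt
    exact hq ⟨V, hVne, hT, hinv, hle.trans_lt hlt⟩

/-- Gram determinant of two vectors. -/
def Gr (x y : Ed d) : ℝ := ‖x‖ ^ 2 * ‖y‖ ^ 2 - (inner ℝ x y : ℝ) ^ 2

lemma Gr_nonneg (x y : Ed d) : 0 ≤ Gr x y := by
  have h := abs_real_inner_le_norm x y
  have h2 : |(inner ℝ x y : ℝ)| ^ 2 ≤ (‖x‖ * ‖y‖) ^ 2 := pow_le_pow_left₀ (abs_nonneg _) h 2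
  rw [sq_abs, mul_pow] at h2
  rw [Gr]; linarith

lemma Gr_le (x y : Ed d) : Gr x y ≤ ‖x‖ ^ 2 * ‖y‖ ^ 2 := by
  rw [Gr]; nlinarith [sq_nonneg (inner ℝ x y : ℝ)]

lemma Gr_add (x y : Ed d) (c : ℝ) : Gr x (y + c • x) = Gr x y := by
  rw [Gr, Gr, norm_add_sq_real, inner_add_right, inner_smul_right, inner_smul_right,
    real_inner_self_eq_norm_sq, norm_smul, real_inner_comm x y, mul_pow, Real.norm_eq_abs, sq_abs]
  ring

lemma Gr_smul (x y : Ed d) (a b : ℝ) : Gr (a • x) (b • y) = a ^ 2 * b ^ 2 * Gr x y := by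
  rw [Gr, Gr, inner_smul_left, inner_smul_right, norm_smul, norm_smul, mul_pow, mul_pow,
    Real.norm_eq_abs, Real.norm_eq_abs, sq_abs, sq_abs]
  simp only [conj_trivial]
  ring

/-- orthonormal pairs -/
def OP (d : ℕ) : Set (Ed d × Ed d) :=
  {x | ‖x.1‖ = 1 ∧ ‖x.2‖ = 1 ∧ (inner ℝ x.1 x.2 : ℝ) = 0}

lemma isCompact_OP : IsCompact (OP d) := by
  apply Metric.isCompact_of_isClosed_isBounded
  · apply IsClosed.inter
    · exact isClosed_eq (by fun_prop) continuous_const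
    · apply IsClosed.inter
      · exact isClosed_eq (by fun_prop) continuous_const
      · exact isClosed_eq (by fun_prop) continuous_const
  · refine (Metric.isBounded_closedBall (x := (0 : Ed d × Ed d)) (r := 1)).subset ?_
    rintro ⟨p, q⟩ ⟨h1, h2, -⟩
    simp only [mem_closedBall_zero_iff, Prod.norm_def]
    exact max_le h1.le h2.le

lemma N2_eq (g : GLd d) : N2 g =
    sSup ((fun x : Ed d × Ed d => Real.sqrt (Gr (glCLM g x.1) (glCLM g x.2))) '' OP d) := by
  rw [N2]
  congr 1
  ext x
  constructor
  · rintro ⟨p, q, h1, h2, h3, rfl⟩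
    exact ⟨(p, q), ⟨h1, h2, h3⟩, rfl⟩
  · rintro ⟨⟨p, q⟩, ⟨h1, h2, h3⟩, rfl⟩
    exact ⟨p, q, h1, h2, h3, rfl⟩

lemma continuous_Gr : Continuous (fun x : Ed d × Ed d => Gr x.1 x.2) := by
  unfold Gr
  fun_prop

lemma continuous_N2aux : Continuous (fun y : GLd d × (Ed d × Ed d) =>
    Real.sqrt (Gr (glCLM y.1 y.2.1) (glCLM y.1 y.2.2))) := by
  have h1 : Continuous (fun y : GLd d × (Ed d × Ed d) => glCLM y.1 y.2.1) :=
    (continuous_glCLM.comp continuous_fst).clm_apply (continuous_fst.comp continuous_snd)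
  have h2 : Continuous (fun y : GLd d × (Ed d × Ed d) => glCLM y.1 y.2.2) :=
    (continuous_glCLM.comp continuous_fst).clm_apply (continuous_snd.comp continuous_snd)
  have h3 := continuous_Gr.comp (h1.prodMk h2)
  exact Real.continuous_sqrt.comp h3

lemma continuous_N2 : Continuous (N2 (d := d)) := by
  have h : (N2 (d := d)) = fun g => sSup ((fun x : Ed d × Ed d =>
    Real.sqrt (Gr (glCLM g x.1) (glCLM g x.2))) '' OP d) := funext N2_eq
  rw [h]
  exact isCompact_OP.continuous_sSup continuous_N2aux

lemma N2_bdd (g : GLd d) : BddAbove ((fun x : Ed d × Ed d =>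
    Real.sqrt (Gr (glCLM g x.1) (glCLM g x.2))) '' OP d) := by
  apply isCompact_OP.bddAbove_image
  have h : Continuous (fun x : Ed d × Ed d => (g, x)) := by fun_prop
  have := continuous_N2aux.comp h
  simp only [Function.comp_def] at this
  exact this.continuousOn

lemma N2_nonneg (g : GLd d) : 0 ≤ N2 g := by
  rw [N2_eq]
  apply Real.sSup_nonneg
  rintro _ ⟨x, -, rfl⟩
  exact Real.sqrt_nonneg _

lemma le_N2 (g : GLd d) {p q : Ed d} (hp : ‖p‖ = 1) (hq : ‖q‖ = 1) (h : (inner ℝ p q : ℝ) = 0) :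
    Real.sqrt (Gr (glCLM g p) (glCLM g q)) ≤ N2 g := by
  rw [N2_eq]
  exact le_csSup (N2_bdd g) ⟨(p, q), ⟨hp, hq, h⟩, rfl⟩

lemma Gr_map_le (g : GLd d) (v w : Ed d) :
    Gr (glCLM g v) (glCLM g w) ≤ N2 g ^ 2 * Gr v w := by
  by_cases hv : v = 0
  · subst hv
    simp [Gr]
  have hv' : ‖v‖ ≠ 0 := norm_ne_zero_iff.2 hv
  set c : ℝ := -((inner ℝ v w : ℝ) / ‖v‖ ^ 2) with hc
  set u := w + c • v with hu
  have e1 : Gr v w = Gr v u := (Gr_add v w c).symm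
  have e2 : Gr (glCLM g v) (glCLM g w) = Gr (glCLM g v) (glCLM g u) := by
    rw [hu, map_add, map_smul, Gr_add]
  have horth : (inner ℝ v u : ℝ) = 0 := by
    rw [hu, inner_add_right, inner_smul_right, real_inner_self_eq_norm_sq, hc]
    field_simp
    ring
  rw [e1, e2]
  by_cases hu0 : u = 0
  · rw [hu0]
    simp [Gr]
  have hu' : ‖u‖ ≠ 0 := norm_ne_zero_iff.2 hu0
  have hvp : v = ‖v‖ • (‖v‖⁻¹ • v) := by rw [smul_smul, mul_inv_cancel₀ hv', one_smul]
  have hup : u = ‖u‖ • (‖u‖⁻¹ • u) := by rw [smul_smul, mul_inv_cancel₀ hu', one_smul]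
  have hn := le_N2 g (p := ‖v‖⁻¹ • v) (q := ‖u‖⁻¹ • u) (by simp [norm_smul, hv'])
    (by simp [norm_smul, hu']) (by rw [inner_smul_left, inner_smul_right, horth]; simp)
  have hn2 : Gr (glCLM g (‖v‖⁻¹ • v)) (glCLM g (‖u‖⁻¹ • u)) ≤ N2 g ^ 2 := by
    rw [← Real.sq_sqrt (Gr_nonneg (glCLM g (‖v‖⁻¹ • v)) (glCLM g (‖u‖⁻¹ • u)))]
    exact pow_le_pow_left₀ (Real.sqrt_nonneg _) hn 2
  have e3 : Gr (glCLM g v) (glCLM g u) =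
      ‖v‖ ^ 2 * ‖u‖ ^ 2 * Gr (glCLM g (‖v‖⁻¹ • v)) (glCLM g (‖u‖⁻¹ • u)) := by
    conv_lhs => rw [hvp, hup]
    rw [map_smul, map_smul _ ‖u‖, Gr_smul]
  have e4 : Gr v u = ‖v‖ ^ 2 * ‖u‖ ^ 2 := by rw [Gr, horth]; ring
  rw [e3, e4, mul_comm]
  exact mul_le_mul_of_nonneg_right hn2 (by positivity)

lemma N2_mul_le (g h : GLd d) : N2 (g * h) ≤ N2 g * N2 h := by
  rw [N2_eq (g * h)]
  apply Real.sSup_le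
  · rintro _ ⟨⟨p, q⟩, ⟨hp, hq, hpq⟩, rfl⟩
    dsimp only at hp hq hpq ⊢
    rw [glCLM_mul, glCLM_mul]
    have h1 := Gr_map_le g (glCLM h p) (glCLM h q)
    have h2 := le_N2 h hp hq hpq
    calc _ ≤ Real.sqrt (N2 g ^ 2 * Gr (glCLM h p) (glCLM h q)) := Real.sqrt_le_sqrt h1
      _ = N2 g * Real.sqrt (Gr (glCLM h p) (glCLM h q)) := by
        rw [Real.sqrt_mul (sq_nonneg _), Real.sqrt_sq (N2_nonneg g)]
      _ ≤ _ := mul_le_mul_of_nonneg_left h2 (N2_nonneg g)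
  · exact mul_nonneg (N2_nonneg g) (N2_nonneg h)

lemma N2_one_le (hd : 2 ≤ d) : 1 ≤ N2 (1 : GLd d) := by
  let i : Fin d := ⟨0, by omega⟩
  let j : Fin d := ⟨1, by omega⟩
  have hij : i ≠ j := by simp [i, j]
  have ho : (inner ℝ (EuclideanSpace.single i (1 : ℝ)) (EuclideanSpace.single j (1 : ℝ)) : ℝ) = 0 :=
    (EuclideanSpace.orthonormal_single (𝕜 := ℝ) (ι := Fin d)).2 hij
  have h := le_N2 (1 : GLd d) (p := EuclideanSpace.single i (1 : ℝ))
    (q := EuclideanSpace.single j (1 : ℝ)) (by simp) (by simp)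
    ho
  refine le_trans (le_of_eq ?_) h
  simp [glCLM_one, Gr, ho]

lemma N2_pos (hd : 2 ≤ d) (g : GLd d) : 0 < N2 g := by
  have h1 := N2_mul_le g g⁻¹
  rw [mul_inv_cancel] at h1
  have h2 := N2_one_le hd
  rcases (N2_nonneg g).lt_or_eq with h | h
  · exact h
  · rw [← h] at h1
    linarith

lemma continuous_log_N2 (hd : 2 ≤ d) : Continuous (fun g : GLd d => Real.log (N2 g)) :=
  continuous_N2.log fun g => (N2_pos hd g).ne'

lemma log_N2_mul_le (hd : 2 ≤ d) (g h : GLd d) :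
    Real.log (N2 (g * h)) ≤ Real.log (N2 g) + Real.log (N2 h) := by
  rw [← Real.log_mul (N2_pos hd g).ne' (N2_pos hd h).ne']
  exact Real.log_le_log (N2_pos hd _) (N2_mul_le g h)

lemma tendsto_N2 (hd : 2 ≤ d) {μ : Measure (GLd d)} (hμ : Good μ) :
    Tendsto (fun n : ℕ => (n : ℝ)⁻¹ * ∫ g, Real.log (N2 g) ∂(mconvN μ n)) atTop (𝓝 (L12 μ)) := by
  have hp : ∀ n, IsProbabilityMeasure (mconvN μ n) := fun n => (hμ.convN n).prob
  have := hμ.prob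
  have hc := continuous_log_N2 (d := d) hd
  have hci : Continuous (fun g : GLd d => Real.log (N2 g⁻¹)) := hc.comp continuous_inv
  have hlow : ∀ n : ℕ, -((|∫ g, Real.log (N2 g⁻¹) ∂μ| + |Real.log (N2 (1 : GLd d))|) * n)
      + Real.log (N2 (1 : GLd d)) ≤
      ∫ g, Real.log (N2 g) ∂(mconvN μ n) := by
    intro n
    induction n with
    | zero => simp [mconvN_zero]
    | succ n ih =>
      rw [integral_convN_succ hμ n hc]
      have h1 : ∀ h : GLd d, (∫ g, Real.log (N2 g) ∂(mconvN μ n)) - Real.log (N2 h⁻¹) ≤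
          ∫ g, Real.log (N2 (g * h)) ∂(mconvN μ n) := by
        intro h
        have e : ∫ g, (Real.log (N2 g) - Real.log (N2 h⁻¹)) ∂(mconvN μ n) ≤
            ∫ g, Real.log (N2 (g * h)) ∂(mconvN μ n) := by
          apply integral_mono
          · exact ((hμ.convN n).integrable hc).sub (integrable_const _)
          · exact (hμ.convN n).integrable (hc.comp (continuous_mul_const h))
          · intro g
            have := log_N2_mul_le hd (g * h) h⁻¹
            rw [mul_inv_cancel_right] at this
            dsimp only
            linarith
        rw [integral_sub ((hμ.convN n).integrable hc) (integrable_const _)] at e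
        simpa using e
      have h2 := integral_mono (μ := μ) ((integrable_const _).sub (hμ.integrable hci))
        (integrable_conv_right (hμ.convN n) hμ hc) h1
      simp only [Pi.sub_apply] at h2
      rw [integral_sub (integrable_const _) (hμ.integrable hci)] at h2
      simp only [integral_const, probReal_univ, smul_eq_mul, one_mul] at h2
      refine le_trans ?_ h2
      push_cast
      have := le_abs_self (∫ g, Real.log (N2 g⁻¹) ∂μ)
      have := abs_nonneg (Real.log (N2 (1 : GLd d)))
      linarith
  obtain ⟨l, hl⟩ := fekete hμ hc (fun n => Eventually.of_forall fun h g => log_N2_mul_le hd g h)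
    (K := |∫ g, Real.log (N2 g⁻¹) ∂μ| + |Real.log (N2 (1 : GLd d))|) (fun n => by
      have h1 := hlow n
      have h2 : 0 ≤ Real.log (N2 (1 : GLd d)) := Real.log_nonneg (N2_one_le hd)
      linarith)
  have : L12 μ = l := hl.limUnder_eq
  rw [this]
  exact hl

/-- projective distance on the sphere -/
def dl (v w : Sph d) : ℝ := Real.sqrt (Gr (v : Ed d) (w : Ed d))

lemma dl_nonneg (v w : Sph d) : 0 ≤ dl v w := Real.sqrt_nonneg _

lemma dl_sq (v w : Sph d) : dl v w ^ 2 = 1 - (inner ℝ (v : Ed d) (w : Ed d) : ℝ) ^ 2 := by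
  rw [dl, Real.sq_sqrt (Gr_nonneg _ _), Gr, sph_norm, sph_norm]
  norm_num

lemma dl_le_one (v w : Sph d) : dl v w ≤ 1 := by
  have h := dl_sq v w
  have h2 := sq_nonneg (inner ℝ (v : Ed d) (w : Ed d) : ℝ)
  have h3 := dl_nonneg v w
  nlinarith

lemma continuous_dl : Continuous (fun p : Sph d × Sph d => dl p.1 p.2) := by
  have h : Continuous (fun p : Sph d × Sph d => ((p.1 : Ed d), (p.2 : Ed d))) := by fun_prop
  have h2 := continuous_Gr.comp h
  simp only [Function.comp_def] at h2
  exact h2.sqrt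

/-- log of the expansion factor -/
def xf (g : GLd d) (v w : Sph d) : ℝ := Real.log (N2 g) - sig g v - sig g w

lemma dl_act (hd : 2 ≤ d) (g : GLd d) (v w : Sph d) :
    dl (act g v) (act g w) ≤ Real.exp (xf g v w) * dl v w := by
  have h1 := glCLM_pos g v
  have h2 := glCLM_pos g w
  have e : Real.exp (xf g v w) = N2 g * ‖glCLM g v‖⁻¹ * ‖glCLM g w‖⁻¹ := by
    rw [xf, sig, sig, Real.exp_sub, Real.exp_sub, Real.exp_log (N2_pos hd g), Real.exp_log h1,
      Real.exp_log h2, div_eq_mul_inv, div_eq_mul_inv]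
  have hN := N2_nonneg g
  rw [e, dl, dl, act_coe, act_coe, Gr_smul]
  rw [Real.sqrt_le_left (by positivity), mul_pow, Real.sq_sqrt (Gr_nonneg _ _)]
  have := mul_le_mul_of_nonneg_left (Gr_map_le g (v : Ed d) (w : Ed d))
    (by positivity : 0 ≤ ‖glCLM g v‖⁻¹ ^ 2 * ‖glCLM g w‖⁻¹ ^ 2)
  refine this.trans (le_of_eq ?_)
  ring

lemma exists_xf_bound (hd : 2 ≤ d) {S : Set (GLd d)} (hS : IsCompact S) :
    ∃ L : ℝ, 1 ≤ L ∧ ∀ g ∈ S, ∀ v w : Sph d, |xf g v w| ≤ L := by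
  obtain ⟨K, hK0, hK⟩ := exists_sig_bound hS
  obtain ⟨C, hC⟩ := hS.exists_bound_of_continuousOn (continuous_log_N2 hd).continuousOn
  refine ⟨1 + |C| + K + K, by linarith [abs_nonneg C], fun g hg v w => ?_⟩
  have h1 := hC g hg
  rw [Real.norm_eq_abs] at h1
  have h2 := hK g hg v
  have h3 := hK g hg w
  have h4 := le_abs_self C
  rw [xf]
  rw [abs_le] at *
  constructor <;> linarith [h1.1, h1.2, h2.1, h2.2, h3.1, h3.2]

lemma continuous_xf (hd : 2 ≤ d) (v w : Sph d) : Continuous (fun g => xf g v w) :=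
  ((continuous_log_N2 hd).sub (continuous_sig_left v)).sub (continuous_sig_left w)

lemma continuous_dl_act (v w : Sph d) : Continuous (fun g => dl (act g v) (act g w)) := by
  have := continuous_dl.comp ((continuous_act_left v).prodMk (continuous_act_left w))
  simpa only [Function.comp_def] using this

lemma continuous_dl_rpow {α : ℝ} (hα : 0 ≤ α) (v w : Sph d) :
    Continuous (fun g => dl (act g v) (act g w) ^ α) :=
  (continuous_dl_act v w).rpow_const fun _ => Or.inr hα

lemma contraction (hd : 2 ≤ d) {μ : Measure (GLd d)} (hμ : Good μ) {m : ℕ} {b : ℝ}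
    (hb : ∀ v, b ≤ Smean μ m v) (hlt : ∫ g, Real.log (N2 g) ∂(mconvN μ m) < 2 * b) :
    ∃ α : ℝ, 0 < α ∧ α ≤ 1 ∧ ∃ ρ : ℝ, 0 < ρ ∧ ρ < 1 ∧ ∀ v w : Sph d,
      ∫ g, dl (act g v) (act g w) ^ α ∂(mconvN μ m) ≤ ρ * dl v w ^ α := by
  have hg := hμ.convN m
  have := hg.prob
  obtain ⟨S, hS, h0⟩ := hg.cs
  have hS' : ∀ᵐ g ∂(mconvN μ m), g ∈ S := h0
  obtain ⟨L, hL1, hL⟩ := exists_xf_bound hd hS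
  have hL0 : 0 < L := by linarith
  set κ := 2 * b - ∫ g, Real.log (N2 g) ∂(mconvN μ m) with hκ
  have hκ0 : 0 < κ := by rw [hκ]; linarith
  set α := min (1 / L) (κ / (2 * L ^ 2)) with hα
  have hα0 : 0 < α := lt_min (by positivity) (by positivity)
  have hαL : α ≤ 1 / L := min_le_left _ _
  have hαL' : α * L ≤ 1 := by rwa [le_div_iff₀ hL0] at hαL
  have hακ : α * (2 * L ^ 2) ≤ κ := by
    have : α ≤ κ / (2 * L ^ 2) := min_le_right _ _
    rwa [le_div_iff₀ (by positivity)] at this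
  refine ⟨α, hα0, by nlinarith, max (1 / 2) (1 - α * κ / 2), by positivity, ?_, fun v w => ?_⟩
  · refine max_lt (by norm_num) ?_
    have : 0 < α * κ := by positivity
    linarith
  have hD : 0 ≤ dl v w ^ α := Real.rpow_nonneg (dl_nonneg v w) _
  have hic := hg.integrable (continuous_xf hd v w)
  have h1 : ∫ g, dl (act g v) (act g w) ^ α ∂(mconvN μ m) ≤
      ∫ g, (1 + α ^ 2 * L ^ 2 + α * xf g v w) * dl v w ^ α ∂(mconvN μ m) := by
    apply integral_mono_ae
    · exact hg.integrable (continuous_dl_rpow hα0.le v w)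
    · exact hg.integrable ((continuous_const.add (continuous_const.mul
        (continuous_xf hd v w))).mul continuous_const)
    · filter_upwards [hS'] with g hgS
      have hx := hL g hgS v w
      have hax : |α * xf g v w| ≤ 1 := by
        rw [abs_mul, abs_of_pos hα0]
        exact (mul_le_mul_of_nonneg_left hx hα0.le).trans hαL'
      calc dl (act g v) (act g w) ^ α ≤ (Real.exp (xf g v w) * dl v w) ^ α :=
            Real.rpow_le_rpow (dl_nonneg _ _) (dl_act hd g v w) hα0.le
        _ = Real.exp (α * xf g v w) * dl v w ^ α := by
            rw [Real.mul_rpow (Real.exp_pos _).le (dl_nonneg _ _), ← Real.exp_mul, mul_comm α]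
        _ ≤ _ := by
            refine mul_le_mul_of_nonneg_right ?_ hD
            have h3 := Real.abs_exp_sub_one_sub_id_le hax
            have h4 := le_abs_self (Real.exp (α * xf g v w) - 1 - α * xf g v w)
            have h5 : (α * xf g v w) ^ 2 ≤ α ^ 2 * L ^ 2 := by
              rw [mul_pow]
              refine mul_le_mul_of_nonneg_left ?_ (by positivity)
              rw [← sq_abs]
              exact pow_le_pow_left₀ (abs_nonneg _) hx 2
            linarith
  refine h1.trans ?_
  rw [integral_mul_const]
  refine mul_le_mul_of_nonneg_right (le_trans ?_ (le_max_right _ _)) hD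
  have i1 := hg.integrable (continuous_log_N2 hd)
  have i2 := hg.integrable (continuous_sig_left v)
  have i3 := hg.integrable (continuous_sig_left w)
  have i12 : Integrable (fun g => Real.log (N2 g) - sig g v) (mconvN μ m) := i1.sub i2
  have i4 : Integrable (fun g => α * xf g v w) (mconvN μ m) := hic.const_mul α
  rw [integral_add (integrable_const _) i4, integral_const_mul]
  simp only [integral_const, probReal_univ, smul_eq_mul, one_mul]
  have e1 : ∫ g, xf g v w ∂(mconvN μ m) = ∫ g, Real.log (N2 g) ∂(mconvN μ m) -
      Smean μ m v - Smean μ m w := by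
    simp only [xf]
    rw [integral_sub i12 i3, integral_sub i1 i2]
    rfl
  have e2 : ∫ g, xf g v w ∂(mconvN μ m) ≤ -κ := by
    rw [e1]
    linarith [hb v, hb w]
  have e3 := mul_le_mul_of_nonneg_left e2 hα0.le
  have e4 := mul_le_mul_of_nonneg_left hακ hα0.le
  nlinarith

lemma exists_dl_bound (hd : 2 ≤ d) {S : Set (GLd d)} (hS : IsCompact S) :
    ∃ M : ℝ, 1 ≤ M ∧ ∀ α : ℝ, 0 ≤ α → α ≤ 1 → ∀ g ∈ S, ∀ v w : Sph d,
      dl (act g v) (act g w) ^ α ≤ M * dl v w ^ α := by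
  obtain ⟨L, hL1, hL⟩ := exists_xf_bound hd hS
  have hM : 1 ≤ Real.exp L := by rw [← Real.exp_zero]; exact Real.exp_le_exp.2 (by linarith)
  refine ⟨Real.exp L, hM, fun α h0 h1 g hg v w => ?_⟩
  have h2 : dl (act g v) (act g w) ≤ Real.exp L * dl v w :=
    (dl_act hd g v w).trans (mul_le_mul_of_nonneg_right
      (Real.exp_le_exp.2 ((le_abs_self _).trans (hL g hg v w))) (dl_nonneg _ _))
  calc _ ≤ (Real.exp L * dl v w) ^ α := Real.rpow_le_rpow (dl_nonneg _ _) h2 h0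
    _ = Real.exp L ^ α * dl v w ^ α := Real.mul_rpow (Real.exp_pos _).le (dl_nonneg _ _)
    _ ≤ _ := by
      refine mul_le_mul_of_nonneg_right ?_ (Real.rpow_nonneg (dl_nonneg _ _) _)
      calc Real.exp L ^ α ≤ Real.exp L ^ (1 : ℝ) := Real.rpow_le_rpow_of_exponent_le hM h1
        _ = _ := Real.rpow_one _

lemma min_norm_le (v w : Sph d) :
    ‖(v : Ed d) - w‖ ≤ 2 * dl v w ∨ ‖(v : Ed d) + w‖ ≤ 2 * dl v w := by
  have h1 := dl_sq v w
  have h2 := norm_sub_sq_real (v : Ed d) w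
  have h3 := norm_add_sq_real (v : Ed d) w
  rw [sph_norm, sph_norm] at h2 h3
  have hd0 := dl_nonneg v w
  have hd1 := dl_le_one v w
  set s := (inner ℝ (v : Ed d) (w : Ed d) : ℝ)
  have hs : |s| ≤ 1 := by
    have := abs_real_inner_le_norm (v : Ed d) w
    rwa [sph_norm, sph_norm, one_mul] at this
  rw [abs_le] at hs
  rcases le_total 0 s with h | h
  · left
    refine le_of_sq_le_sq ?_ (by positivity)
    rw [h2, mul_pow, h1]
    nlinarith
  · right
    refine le_of_sq_le_sq ?_ (by positivity)
    rw [h3, mul_pow, h1]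
    nlinarith

lemma log_sub_le {a b c : ℝ} (hb : 0 < b) (ha : 0 < a) (hc : c ≤ b) (hc0 : 0 < c) :
    Real.log a - Real.log b ≤ c⁻¹ * |a - b| := by
  rw [← Real.log_div ha.ne' hb.ne']
  calc Real.log (a / b) ≤ a / b - 1 := Real.log_le_sub_one_of_pos (by positivity)
    _ = b⁻¹ * (a - b) := by field_simp
    _ ≤ b⁻¹ * |a - b| := mul_le_mul_of_nonneg_left (le_abs_self _) (by positivity)
    _ ≤ c⁻¹ * |a - b| := mul_le_mul_of_nonneg_right (inv_anti₀ hc0 hc) (abs_nonneg _)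

lemma exists_sig_lip {S : Set (GLd d)} (hS : IsCompact S) :
    ∃ C : ℝ, 0 ≤ C ∧ ∀ α : ℝ, 0 ≤ α → α ≤ 1 → ∀ g ∈ S, ∀ v w : Sph d,
      |sig g v - sig g w| ≤ C * dl v w ^ α := by
  obtain ⟨K, hK0, hK⟩ := exists_sig_bound hS
  obtain ⟨G, hG⟩ := hS.exists_bound_of_continuousOn (continuous_glCLM (d := d)).continuousOn
  refine ⟨(Real.exp (-K))⁻¹ * (|G| * 2), by positivity, fun α h0 h1 g hg v w => ?_⟩
  have hG' : ‖glCLM g‖ ≤ |G| := (hG g hg).trans (le_abs_self _)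
  have hlow : ∀ u : Sph d, Real.exp (-K) ≤ ‖glCLM g u‖ := by
    intro u
    rw [← Real.exp_log (glCLM_pos g u)]
    exact Real.exp_le_exp.2 (abs_le.1 (hK g hg u)).1
  have hdiff : |‖glCLM g v‖ - ‖glCLM g w‖| ≤ |G| * 2 * dl v w := by
    rcases min_norm_le v w with h | h
    · calc _ ≤ ‖glCLM g v - glCLM g w‖ := abs_norm_sub_norm_le _ _
        _ = ‖glCLM g ((v : Ed d) - w)‖ := by rw [map_sub]
        _ ≤ ‖glCLM g‖ * ‖(v : Ed d) - w‖ := (glCLM g).le_opNorm _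
        _ ≤ |G| * (2 * dl v w) := mul_le_mul hG' h (norm_nonneg _) (abs_nonneg _)
        _ = _ := by ring
    · calc _ = |‖glCLM g v‖ - ‖-glCLM g w‖| := by rw [norm_neg]
        _ ≤ ‖glCLM g v - -glCLM g w‖ := abs_norm_sub_norm_le _ _
        _ = ‖glCLM g ((v : Ed d) + w)‖ := by rw [map_add, sub_neg_eq_add]
        _ ≤ ‖glCLM g‖ * ‖(v : Ed d) + w‖ := (glCLM g).le_opNorm _
        _ ≤ |G| * (2 * dl v w) := mul_le_mul hG' h (norm_nonneg _) (abs_nonneg _)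
        _ = _ := by ring
  have hda : dl v w ≤ dl v w ^ α := by
    calc dl v w = dl v w ^ (1 : ℝ) := (Real.rpow_one _).symm
      _ ≤ _ := by
        rcases (dl_nonneg v w).eq_or_lt with h | h
        · rw [← h, Real.zero_rpow one_ne_zero]
          exact Real.rpow_nonneg le_rfl _
        · exact Real.rpow_le_rpow_of_exponent_ge h (dl_le_one v w) h1
  have hexp := Real.exp_pos (-K)
  have hfin : |sig g v - sig g w| ≤ (Real.exp (-K))⁻¹ * |‖glCLM g v‖ - ‖glCLM g w‖| := by
    rw [abs_le']
    constructor
    · exact log_sub_le (glCLM_pos g w) (glCLM_pos g v) (hlow w) hexp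
    · rw [neg_sub, abs_sub_comm]
      exact log_sub_le (glCLM_pos g v) (glCLM_pos g w) (hlow v) hexp
  refine hfin.trans ?_
  rw [mul_assoc]
  refine mul_le_mul_of_nonneg_left (hdiff.trans ?_) (by positivity)
  exact mul_le_mul_of_nonneg_left hda (by positivity)

/-- Markov operator on complex continuous functions. -/
def Qc {μ : Measure (GLd d)} (hμ : Good μ) : C(Sph d, ℂ) →L[ℂ] C(Sph d, ℂ) :=
  LinearMap.mkContinuous
    { toFun := fun f => ⟨fun v => ∫ g, f (act g v) ∂μ,
        continuous_integral_of_good hμ (continuous_uncurry_act f.continuous)⟩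
      map_add' := fun f h => by
        ext v
        simp only [ContinuousMap.coe_mk, ContinuousMap.add_apply]
        exact integral_add (hμ.integrable (f.continuous.comp (continuous_act_left v)))
          (hμ.integrable (h.continuous.comp (continuous_act_left v)))
      map_smul' := fun c f => by
        ext v
        simp only [ContinuousMap.coe_mk, ContinuousMap.smul_apply, RingHom.id_apply]
        exact integral_smul c _ } 1 (fun f => by
      have := hμ.prob
      rw [one_mul, ContinuousMap.norm_le _ (norm_nonneg _)]
      intro v
      have h := norm_integral_le_of_norm_le_const (μ := μ) (f := fun g => f (act g v))
          (C := ‖f‖) (Eventually.of_forall fun g => f.norm_coe_le_norm _)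
      simpa using h)

lemma Qc_apply {μ : Measure (GLd d)} (hμ : Good μ) (f : C(Sph d, ℂ)) (v : Sph d) :
    Qc hμ f v = ∫ g, f (act g v) ∂μ := rfl

lemma integrable_act {μ : Measure (GLd d)} (hμ : Good μ) (f : C(Sph d, ℂ)) (v : Sph d) :
    Integrable (fun g => f (act g v)) μ :=
  hμ.integrable (f.continuous.comp (continuous_act_left v))

lemma Qc_pow_apply {μ : Measure (GLd d)} (hμ : Good μ) (n : ℕ) (f : C(Sph d, ℂ)) (v : Sph d) :
    (Qc hμ ^ n) f v = ∫ g, f (act g v) ∂(mconvN μ n) := by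
  induction n generalizing v with
  | zero => simp [mconvN_zero, act_one]
  | succ n ih =>
    have hc : Continuous (fun g => f (act g v)) := f.continuous.comp (continuous_act_left v)
    rw [integral_convN_succ hμ n hc, pow_succ']
    change (Qc hμ ((Qc hμ ^ n) f)) v = _
    rw [Qc_apply]
    simp only [ih, act_mul]

/-- Hölder condition -/
def Hol (α C : ℝ) (f : C(Sph d, ℂ)) : Prop := ∀ v w : Sph d, ‖f v - f w‖ ≤ C * dl v w ^ α

lemma dlp_nonneg (α : ℝ) (v w : Sph d) : 0 ≤ dl v w ^ α := Real.rpow_nonneg (dl_nonneg _ _) _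

lemma dlp_le_one {α : ℝ} (hα : 0 ≤ α) (v w : Sph d) : dl v w ^ α ≤ 1 :=
  Real.rpow_le_one (dl_nonneg _ _) (dl_le_one _ _) hα

lemma Hol.mono {α C C' : ℝ} {f : C(Sph d, ℂ)} (h : Hol α C f) (hC : C ≤ C') : Hol α C' f :=
  fun v w => (h v w).trans (mul_le_mul_of_nonneg_right hC (dlp_nonneg _ _ _))

lemma Hol.add {α C C' : ℝ} {f f' : C(Sph d, ℂ)} (h : Hol α C f) (h' : Hol α C' f') :
    Hol α (C + C') (f + f') := fun v w => by
  have : (f + f') v - (f + f') w = (f v - f w) + (f' v - f' w) := by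
    simp only [ContinuousMap.add_apply]; ring
  rw [this, add_mul]
  exact (norm_add_le _ _).trans (add_le_add (h v w) (h' v w))

lemma Hol.smul {α C : ℝ} {f : C(Sph d, ℂ)} (h : Hol α C f) (t : ℂ) :
    Hol α (‖t‖ * C) (t • f) := fun v w => by
  have : (t • f) v - (t • f) w = t * (f v - f w) := by
    simp only [ContinuousMap.smul_apply, smul_eq_mul]; ring
  rw [this, norm_mul, mul_assoc]
  exact mul_le_mul_of_nonneg_left (h v w) (norm_nonneg _)

lemma Hol.sub {α C C' : ℝ} {f f' : C(Sph d, ℂ)} (h : Hol α C f) (h' : Hol α C' f') :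
    Hol α (C + C') (f - f') := by
  have := h.add (h'.smul (-1))
  have e : f + (-1 : ℂ) • f' = f - f' := by ext v; simp [sub_eq_add_neg]
  rw [norm_neg, norm_one, one_mul, e] at this
  exact this

lemma Hol.integral {α C R : ℝ} (hα : 0 ≤ α) (hC : 0 ≤ C)
    {μ : Measure (GLd d)} (hμ : Good μ) {f F : C(Sph d, ℂ)}
    (hF : ∀ v, F v = ∫ g, f (act g v) ∂μ)
    (hR : ∀ v w : Sph d, ∫ g, dl (act g v) (act g w) ^ α ∂μ ≤ R * dl v w ^ α)
    (h : Hol α C f) : Hol α (R * C) F := fun v w => by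
  rw [hF, hF, ← integral_sub (integrable_act hμ f v) (integrable_act hμ f w)]
  calc _ ≤ ∫ g, ‖f (act g v) - f (act g w)‖ ∂μ := norm_integral_le_integral_norm _
    _ ≤ ∫ g, C * dl (act g v) (act g w) ^ α ∂μ := by
      apply integral_mono
      · exact ((integrable_act hμ f v).sub (integrable_act hμ f w)).norm
      · exact (hμ.integrable (continuous_dl_rpow hα v w)).const_mul _
      · intro g
        exact h _ _
    _ = C * ∫ g, dl (act g v) (act g w) ^ α ∂μ := integral_const_mul _ _
    _ ≤ C * (R * dl v w ^ α) := mul_le_mul_of_nonneg_left (hR v w) hC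
    _ = _ := by ring

lemma Qc_sub_self {α C : ℝ} (hα : 0 ≤ α) (hC : 0 ≤ C) {μ : Measure (GLd d)} (hμ : Good μ)
    {f : C(Sph d, ℂ)} (h : Hol α C f) : ‖Qc hμ f - f‖ ≤ C := by
  have := hμ.prob
  rw [ContinuousMap.norm_le _ hC]
  intro v
  rw [ContinuousMap.sub_apply, Qc_apply]
  have e : ∫ g, f (act g v) ∂μ - f v = ∫ g, (f (act g v) - f v) ∂μ := by
    rw [integral_sub (integrable_act hμ f v) (integrable_const _)]
    simp
  rw [e]
  have h2 := norm_integral_le_of_norm_le_const (μ := μ) (f := fun g => f (act g v) - f v)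
    (C := C) (Eventually.of_forall fun g => (h _ _).trans (by
      have := mul_le_mul_of_nonneg_left (dlp_le_one hα (act g v) v) hC
      simpa using this))
  simpa using h2

/-- abstract data of the perturbation -/
structure Pert (d : ℕ) where
  α : ℝ
  M : ℝ
  ρ : ℝ
  m : ℕ
  Cφ : ℝ
  μ₀ : Measure (GLd d)
  μ₁ : Measure (GLd d)
  g₀ : Good μ₀
  g₁ : Good μ₁
  φ₀ : C(Sph d, ℂ)
  φ₁ : C(Sph d, ℂ)
  hα : 0 ≤ α
  hM : 1 ≤ M
  hρ0 : 0 < ρ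
  hρ1 : ρ < 1
  hm : 0 < m
  hCφ : 0 ≤ Cφ
  hM₀ : ∀ f C, 0 ≤ C → Hol α C f → Hol α (M * C) (Qc g₀ f)
  hM₁ : ∀ f C, 0 ≤ C → Hol α C f → Hol α (M * C) (Qc g₁ f)
  hρ : ∀ f C, 0 ≤ C → Hol α C f → Hol α (ρ * C) ((Qc g₀ ^ m) f)
  hφ₀ : Hol α Cφ φ₀
  hφ₁ : Hol α Cφ φ₁

namespace Pert
variable (P : Pert d)

/-- perturbed operator -/
def Q (t : ℂ) : C(Sph d, ℂ) →L[ℂ] C(Sph d, ℂ) := Qc P.g₀ + t • (Qc P.g₁ - Qc P.g₀)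

/-- perturbed observable -/
def φ (t : ℂ) : C(Sph d, ℂ) := P.φ₀ + t • (P.φ₁ - P.φ₀)

lemma Q_apply (t : ℂ) (f : C(Sph d, ℂ)) :
    P.Q t f = Qc P.g₀ f + t • (Qc P.g₁ f - Qc P.g₀ f) := rfl

lemma hol_D {C : ℝ} (hC : 0 ≤ C) {f : C(Sph d, ℂ)} (h : Hol P.α C f) (t : ℂ) :
    Hol P.α (‖t‖ * (2 * P.M * C)) (t • (Qc P.g₁ f - Qc P.g₀ f)) := by
  have := (((P.hM₁ f C hC h).sub (P.hM₀ f C hC h)).smul t)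
  refine this.mono (le_of_eq ?_)
  ring

lemma hol_Q {C : ℝ} (hC : 0 ≤ C) {f : C(Sph d, ℂ)} (h : Hol P.α C f) {t : ℂ} (ht : ‖t‖ ≤ 1) :
    Hol P.α (3 * P.M * C) (P.Q t f) := by
  rw [Q_apply]
  refine ((P.hM₀ f C hC h).add (P.hol_D hC h t)).mono ?_
  have hM : 0 ≤ 2 * P.M * C := mul_nonneg (by linarith [P.hM]) hC
  have := mul_le_mul_of_nonneg_right ht hM
  linarith

lemma hol_Q_pow {C : ℝ} (hC : 0 ≤ C) {f : C(Sph d, ℂ)} (h : Hol P.α C f) {t : ℂ} (ht : ‖t‖ ≤ 1)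
    (k : ℕ) : Hol P.α ((3 * P.M) ^ k * C) ((P.Q t ^ k) f) := by
  have hM : 0 ≤ 3 * P.M := by linarith [P.hM]
  induction k with
  | zero => simpa using h
  | succ k ih =>
    have e : (P.Q t ^ (k + 1)) f = P.Q t ((P.Q t ^ k) f) := by rw [pow_succ']; rfl
    rw [e]
    refine (P.hol_Q (by positivity) ih ht).mono (le_of_eq ?_)
    ring

lemma hol_Q0_pow {C : ℝ} (hC : 0 ≤ C) {f : C(Sph d, ℂ)} (h : Hol P.α C f)
    (k : ℕ) : Hol P.α (P.M ^ k * C) ((Qc P.g₀ ^ k) f) := by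
  have hM : 0 ≤ P.M := by linarith [P.hM]
  induction k with
  | zero => simpa using h
  | succ k ih =>
    have e : (Qc P.g₀ ^ (k + 1)) f = Qc P.g₀ ((Qc P.g₀ ^ k) f) := by rw [pow_succ']; rfl
    rw [e]
    refine (P.hM₀ _ _ (by positivity) ih).mono (le_of_eq ?_)
    ring

lemma hol_diff (k : ℕ) : ∃ B : ℝ, 0 ≤ B ∧ ∀ (t : ℂ), ‖t‖ ≤ 1 → ∀ (C : ℝ), 0 ≤ C →
    ∀ f : C(Sph d, ℂ), Hol P.α C f →
      Hol P.α (B * ‖t‖ * C) ((P.Q t ^ k) f - (Qc P.g₀ ^ k) f) := by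
  have hM : 0 ≤ P.M := by linarith [P.hM]
  induction k with
  | zero =>
    refine ⟨0, le_rfl, fun t _ C _ f _ v w => ?_⟩
    simp
  | succ k ih =>
    obtain ⟨B, hB, ih⟩ := ih
    refine ⟨B * (3 * P.M) + P.M ^ k * (2 * P.M), by positivity, fun t ht C hC f hf => ?_⟩
    have e : (P.Q t ^ (k + 1)) f - (Qc P.g₀ ^ (k + 1)) f =
        ((P.Q t ^ k) (P.Q t f) - (Qc P.g₀ ^ k) (P.Q t f)) +
          (Qc P.g₀ ^ k) (t • (Qc P.g₁ f - Qc P.g₀ f)) := by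
      rw [pow_succ, pow_succ]
      change (P.Q t ^ k) (P.Q t f) - (Qc P.g₀ ^ k) (Qc P.g₀ f) = _
      have : t • (Qc P.g₁ f - Qc P.g₀ f) = P.Q t f - Qc P.g₀ f := by rw [Q_apply]; abel
      rw [this, map_sub]
      abel
    rw [e]
    have h1 := ih t ht _ (by positivity) _ (P.hol_Q hC hf ht)
    have h2 := P.hol_Q0_pow (by positivity) (P.hol_D hC hf t) k
    refine (h1.add h2).mono (le_of_eq ?_)
    ring

lemma exists_r : ∃ r : ℝ, 0 < r ∧ r ≤ 1 ∧ ∃ ρ' : ℝ, 0 < ρ' ∧ ρ' < 1 ∧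
    ∀ t : ℂ, ‖t‖ ≤ r → ∀ (C : ℝ), 0 ≤ C → ∀ f : C(Sph d, ℂ), Hol P.α C f →
      Hol P.α (ρ' * C) ((P.Q t ^ P.m) f) := by
  obtain ⟨B, hB, h⟩ := P.hol_diff P.m
  have h0 := P.hρ0
  have h1 := P.hρ1
  refine ⟨min 1 ((1 - P.ρ) / (2 * (B + 1))), lt_min one_pos (div_pos (by linarith) (by linarith)),
    min_le_left _ _, (1 + P.ρ) / 2, by linarith, by linarith, fun t ht C hC f hf => ?_⟩
  have e : (P.Q t ^ P.m) f = (Qc P.g₀ ^ P.m) f + ((P.Q t ^ P.m) f - (Qc P.g₀ ^ P.m) f) := by abel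
  rw [e]
  refine ((P.hρ f C hC hf).add (h t (ht.trans (min_le_left _ _)) C hC f hf)).mono ?_
  have ht2 := ht.trans (min_le_right _ _)
  rw [le_div_iff₀ (by linarith)] at ht2
  have ht0 := norm_nonneg t
  rw [← add_mul]
  refine mul_le_mul_of_nonneg_right ?_ hC
  nlinarith

lemma exists_decay : ∃ r : ℝ, 0 < r ∧ r ≤ 1 ∧ ∃ θ B : ℝ, 0 < θ ∧ θ < 1 ∧ 0 ≤ B ∧
    ∀ t : ℂ, ‖t‖ ≤ r → ∀ (C : ℝ), 0 ≤ C → ∀ f : C(Sph d, ℂ), Hol P.α C f →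
      ∀ k, Hol P.α (B * θ ^ k * C) ((P.Q t ^ k) f) := by
  obtain ⟨r, hr0, hr1, ρ', h0, h1, h⟩ := P.exists_r
  have hm : (P.m : ℝ) ≠ 0 := by exact_mod_cast P.hm.ne'
  set θ := ρ' ^ ((P.m : ℝ)⁻¹) with hθ
  have hθm : θ ^ P.m = ρ' := by
    rw [hθ, ← Real.rpow_natCast, ← Real.rpow_mul h0.le, inv_mul_cancel₀ hm, Real.rpow_one]
  have hθ0 : 0 < θ := Real.rpow_pos_of_pos h0 _
  have hθ1 : θ < 1 := Real.rpow_lt_one h0.le h1 (by have := P.hm; positivity)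
  have hM : 1 ≤ 3 * P.M := by linarith [P.hM]
  have hM0 : 0 ≤ 3 * P.M := by linarith
  refine ⟨r, hr0, hr1, θ, (3 * P.M) ^ P.m * ρ'⁻¹, hθ0, hθ1, by positivity,
    fun t ht C hC f hf k => ?_⟩
  have hq : ∀ q j, Hol P.α (ρ' ^ q * ((3 * P.M) ^ j * C)) ((P.Q t ^ (P.m * q + j)) f) := by
    intro q j
    induction q with
    | zero => simpa using P.hol_Q_pow hC hf (ht.trans hr1) j
    | succ q ih =>
      have e : P.m * (q + 1) + j = P.m + (P.m * q + j) := by ring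
      have e2 : (P.Q t ^ (P.m + (P.m * q + j))) f = (P.Q t ^ P.m) ((P.Q t ^ (P.m * q + j)) f) := by
        rw [pow_add]; rfl
      rw [e, e2]
      refine (h t ht _ (by positivity) _ ih).mono (le_of_eq ?_)
      ring
  have h2 := hq (k / P.m) (k % P.m)
  rw [Nat.div_add_mod] at h2
  refine h2.mono ?_
  rw [← mul_assoc]
  refine mul_le_mul_of_nonneg_right ?_ hC
  have hj : k % P.m ≤ P.m := (Nat.mod_lt _ P.hm).le
  have e1 : (3 * P.M) ^ (k % P.m) ≤ (3 * P.M) ^ P.m := pow_le_pow_right₀ hM hj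
  have e2 : ρ' ^ (k / P.m) ≤ ρ'⁻¹ * θ ^ k := by
    rw [inv_mul_eq_div, le_div_iff₀ h0]
    conv_rhs => rw [← Nat.div_add_mod k P.m, pow_add, pow_mul, hθm]
    refine mul_le_mul_of_nonneg_left ?_ (by positivity)
    rw [← hθm]
    exact pow_le_pow_of_le_one hθ0.le hθ1.le hj
  calc _ ≤ (ρ'⁻¹ * θ ^ k) * (3 * P.M) ^ P.m := mul_le_mul e2 e1 (by positivity) (by positivity)
    _ = _ := by ring

end Pert

namespace Pert
variable (P : Pert d)

lemma hol_φ {t : ℂ} (ht : ‖t‖ ≤ 1) : Hol P.α (3 * P.Cφ) (P.φ t) := by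
  refine (P.hφ₀.add ((P.hφ₁.sub P.hφ₀).smul t)).mono ?_
  have h0 := P.hCφ
  have := mul_le_mul_of_nonneg_right ht (by linarith : 0 ≤ P.Cφ + P.Cφ)
  linarith

lemma Q_sub_self {C : ℝ} (hC : 0 ≤ C) {f : C(Sph d, ℂ)} (h : Hol P.α C f) {t : ℂ} (ht : ‖t‖ ≤ 1) :
    ‖P.Q t f - f‖ ≤ 3 * C := by
  have h0 := Qc_sub_self P.hα hC P.g₀ h
  have h1 := Qc_sub_self P.hα hC P.g₁ h
  have e : P.Q t f - f = (Qc P.g₀ f - f) + t • ((Qc P.g₁ f - f) - (Qc P.g₀ f - f)) := by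
    rw [Q_apply, sub_sub_sub_cancel_right]; abel
  rw [e]
  have h2 : ‖t • ((Qc P.g₁ f - f) - (Qc P.g₀ f - f))‖ ≤ 1 * (C + C) := by
    rw [norm_smul]
    exact mul_le_mul ht ((norm_sub_le _ _).trans (add_le_add h1 h0)) (norm_nonneg _) zero_le_one
  have h3 := norm_add_le (Qc P.g₀ f - f) (t • ((Qc P.g₁ f - f) - (Qc P.g₀ f - f)))
  linarith

lemma diff_pow (n : ℕ) : Differentiable ℂ (fun t : ℂ => (P.Q t ^ n) (P.φ t)) := by
  have hid : Differentiable ℂ (fun t : ℂ => t) := differentiable_id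
  have hφ : Differentiable ℂ P.φ := by
    unfold φ
    exact (differentiable_const P.φ₀).add (hid.smul_const (P.φ₁ - P.φ₀))
  induction n with
  | zero => simpa using hφ
  | succ n ih =>
    have e : (fun t : ℂ => (P.Q t ^ (n + 1)) (P.φ t)) = fun t =>
        Qc P.g₀ ((P.Q t ^ n) (P.φ t)) +
          t • (Qc P.g₁ ((P.Q t ^ n) (P.φ t)) - Qc P.g₀ ((P.Q t ^ n) (P.φ t))) := by
      funext t
      rw [pow_succ']; rfl
    rw [e]
    have h0 : Differentiable ℂ (fun t : ℂ => Qc P.g₀ ((P.Q t ^ n) (P.φ t))) :=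
      (Qc P.g₀).differentiable.comp ih
    have h1 : Differentiable ℂ (fun t : ℂ => Qc P.g₁ ((P.Q t ^ n) (P.φ t))) :=
      (Qc P.g₁).differentiable.comp ih
    exact h0.add (hid.smul (h1.sub h0))

lemma exists_lam (v₀ : Sph d) : ∃ r : ℝ, 0 < r ∧ r ≤ 1 ∧ ∃ θ B : ℝ, 0 < θ ∧ θ < 1 ∧ 0 ≤ B ∧
    ∃ lam : ℂ → ℂ, DifferentiableOn ℂ lam (Metric.ball 0 r) ∧
      ∀ t ∈ Metric.ball (0 : ℂ) r, ∀ n v, ‖(P.Q t ^ n) (P.φ t) v - lam t‖ ≤ B * θ ^ n := by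
  obtain ⟨r, hr0, hr1, θ, B, hθ0, hθ1, hB, h⟩ := P.exists_decay
  have hCφ := P.hCφ
  have hball : ∀ t ∈ Metric.ball (0 : ℂ) r, ‖t‖ ≤ r := fun t ht => by
    rw [mem_ball_zero_iff] at ht; exact ht.le
  have hH : ∀ t ∈ Metric.ball (0 : ℂ) r, ∀ n,
      Hol P.α (B * θ ^ n * (3 * P.Cφ)) ((P.Q t ^ n) (P.φ t)) := fun t ht n =>
    h t (hball t ht) _ (by positivity) _ (P.hol_φ ((hball t ht).trans hr1)) n
  set A := 3 * (B * (3 * P.Cφ)) with hA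
  have hA0 : 0 ≤ A := by positivity
  have hstep : ∀ t ∈ Metric.ball (0 : ℂ) r, ∀ n,
      dist ((P.Q t ^ n) (P.φ t) v₀) ((P.Q t ^ (n + 1)) (P.φ t) v₀) ≤ A * θ ^ n := by
    intro t ht n
    rw [dist_comm, dist_eq_norm]
    have e : (P.Q t ^ (n + 1)) (P.φ t) = P.Q t ((P.Q t ^ n) (P.φ t)) := by rw [pow_succ']; rfl
    rw [e, ← ContinuousMap.sub_apply]
    refine (ContinuousMap.norm_coe_le_norm _ _).trans ?_
    refine (P.Q_sub_self (by positivity) (hH t ht n) ((hball t ht).trans hr1)).trans (le_of_eq ?_)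
    rw [hA]; ring
  have hex : ∀ t, ∃ l, t ∈ Metric.ball (0 : ℂ) r →
      Tendsto (fun n => (P.Q t ^ n) (P.φ t) v₀) atTop (𝓝 l) := by
    intro t
    by_cases ht : t ∈ Metric.ball (0 : ℂ) r
    · obtain ⟨l, hl⟩ := cauchySeq_tendsto_of_complete
        (cauchySeq_of_le_geometric θ A hθ1 (hstep t ht))
      exact ⟨l, fun _ => hl⟩
    · exact ⟨0, fun h => absurd h ht⟩
  choose lam hlam using hex
  have hdist : ∀ t ∈ Metric.ball (0 : ℂ) r, ∀ n,
      dist ((P.Q t ^ n) (P.φ t) v₀) (lam t) ≤ A * θ ^ n / (1 - θ) := fun t ht n =>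
    dist_le_of_le_geometric_of_tendsto θ A hθ1 (hstep t ht) (hlam t ht) n
  have h1θ : 0 < 1 - θ := by linarith
  refine ⟨r, hr0, hr1, θ, B * (3 * P.Cφ) + A / (1 - θ), hθ0, hθ1, by positivity, lam, ?_, ?_⟩
  · have hU : TendstoUniformlyOn (fun (n : ℕ) (t : ℂ) => (P.Q t ^ n) (P.φ t) v₀) lam atTop
        (Metric.ball 0 r) := by
      rw [Metric.tendstoUniformlyOn_iff]
      intro ε hε
      have hz : Tendsto (fun n : ℕ => A * θ ^ n / (1 - θ)) atTop (𝓝 0) := by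
        have := ((tendsto_pow_atTop_nhds_zero_of_lt_one hθ0.le hθ1).const_mul A).div_const (1 - θ)
        simpa using this
      filter_upwards [hz.eventually (gt_mem_nhds hε)] with n hn t ht
      rw [dist_comm]
      exact (hdist t ht n).trans_lt hn
    refine hU.tendstoLocallyUniformlyOn.differentiableOn (Eventually.of_forall fun n => ?_)
      Metric.isOpen_ball
    have hev := (ContinuousMap.evalCLM ℂ v₀ : C(Sph d, ℂ) →L[ℂ] ℂ).differentiable.comp (P.diff_pow n)
    exact hev.differentiableOn
  · intro t ht n v
    have h1 := hH t ht n v v₀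
    have h2 := hdist t ht n
    rw [dist_eq_norm] at h2
    have h3 : ‖(P.Q t ^ n) (P.φ t) v - (P.Q t ^ n) (P.φ t) v₀‖ ≤ B * θ ^ n * (3 * P.Cφ) :=
      h1.trans (mul_le_of_le_one_right (by positivity) (dlp_le_one P.hα _ _))
    calc _ = ‖((P.Q t ^ n) (P.φ t) v - (P.Q t ^ n) (P.φ t) v₀) +
          ((P.Q t ^ n) (P.φ t) v₀ - lam t)‖ := by congr 1; ring
      _ ≤ _ := norm_add_le _ _
      _ ≤ _ := add_le_add h3 h2
      _ = _ := by ring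
end Pert

lemma analytic_re {lam : ℂ → ℂ} {r : ℝ} (hr0 : 0 < r) (hr1 : r ≤ 1)
    (h : DifferentiableOn ℂ lam (Metric.ball 0 r)) :
    ∃ ε : ℝ, 0 < ε ∧ ε ≤ r ∧ ∃ a : ℕ → ℝ, (Summable fun k : ℕ => |a k| * ε ^ k) ∧
      ∀ t : ℝ, 0 ≤ t → t < ε → (lam t).re = ∑' k : ℕ, a k * t ^ k := by
  set R : NNReal := ⟨r / 2, by positivity⟩ with hR
  have hRc : (R : ℝ) = r / 2 := rfl
  have hR0 : 0 < R := by rw [← NNReal.coe_pos, hRc]; positivity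
  have hsub : Metric.closedBall (0 : ℂ) R ⊆ Metric.ball 0 r :=
    Metric.closedBall_subset_ball (by rw [hRc]; linarith)
  have hf := (h.mono hsub).hasFPowerSeriesOnBall hR0
  set p := cauchyPowerSeries lam 0 R with hp
  set E : NNReal := ⟨r / 4, by positivity⟩ with hE
  have hEc : (E : ℝ) = r / 4 := rfl
  have hER : E < R := by rw [← NNReal.coe_lt_coe, hRc, hEc]; linarith
  have hEr : (E : ENNReal) < p.radius :=
    lt_of_lt_of_le (by exact_mod_cast hER) hf.r_le
  have hsum := p.summable_norm_mul_pow hEr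
  refine ⟨r / 4, by positivity, by linarith, fun k => (p.coeff k).re, ?_, ?_⟩
  · refine Summable.of_nonneg_of_le (fun k => by positivity) (fun k => ?_) hsum
    rw [hEc]
    refine mul_le_mul_of_nonneg_right ?_ (by positivity)
    refine (Complex.abs_re_le_norm _).trans ?_
    exact (FormalMultilinearSeries.norm_apply_eq_norm_coef (p := p) (n := k)).ge
  · intro t ht0 ht
    have hmem : (t : ℂ) ∈ Metric.eball (0 : ℂ) R := by
      rw [Metric.eball_coe, mem_ball_zero_iff, Complex.norm_real, Real.norm_of_nonneg ht0, hRc]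
      linarith
    have hs := hf.hasSum hmem
    simp only [zero_add] at hs
    have hs2 := Complex.hasSum_re hs
    rw [← hs2.tsum_eq]
    refine tsum_congr fun k => ?_
    rw [FormalMultilinearSeries.apply_eq_pow_smul_coeff, smul_eq_mul, ← Complex.ofReal_pow,
      Complex.re_ofReal_mul, mul_comm]

lemma L1_eq (hd : 0 < d) {μ : Measure (GLd d)} (hμ : Good μ) {l C : ℝ}
    (hS : ∀ n v, |Smean μ n v - n * l| ≤ C) : L1 μ = l := by
  have := hμ.prob
  have : Nontrivial (Ed d) := by
    have : Nonempty (Fin d) := ⟨⟨0, hd⟩⟩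
    infer_instance
  have htb : (⊤ : Submodule ℝ (Ed d)) ≠ ⊥ := top_ne_bot
  obtain ⟨v, hv⟩ := exists_sph htb
  have hlim := tendsto_rest hμ htb (Eventually.of_forall map_top_gl)
  rw [L1rest_top] at hlim
  have hC0 : 0 ≤ C := (abs_nonneg _).trans (hS 0 v)
  obtain ⟨K', hK0', hK'⟩ := hμ.sig_bound
  obtain ⟨K, hK0, hK⟩ : ∃ K : ℝ, 0 ≤ K ∧ ∀ᵐ h ∂μ, ∀ v : Sph d, |sig h v - l| ≤ K := by
    refine ⟨K' + |l|, by positivity, ?_⟩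
    filter_upwards [hK'] with h hh v
    exact (abs_sub _ _).trans (by linarith [hh v])
  apply le_antisymm
  · have hW : ∀ (n : ℕ) (v : Sph d), Wvar μ l n v ≤ (K ^ 2 + 2 * K * C) * n := by
      intro n
      induction n with
      | zero =>
        intro v
        rw [Wvar, mconvN_zero, integral_dirac, sig_one]
        simp
      | succ n ih =>
        intro v
        refine (Wvar_succ_le hμ hK n v).trans ?_
        have hc1 : Continuous (fun v => |Smean μ n v - n * l|) :=
          ((continuous_Smean hμ n).sub continuous_const).abs
        have hF : Continuous (fun v => K ^ 2 + 2 * K * |Smean μ n v - n * l| + Wvar μ l n v) :=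
          (continuous_const.add (continuous_const.mul hc1)).add (continuous_Wvar hμ l n)
        have h1 := integral_mono (μ := μ) (hμ.integrable (hF.comp (continuous_act_left v)))
          (integrable_const ((K ^ 2 + 2 * K * C) * ((n + 1 : ℕ) : ℝ))) (fun h => by
            have e1 := ih (act h v)
            have e2 := mul_le_mul_of_nonneg_left (hS n (act h v)) (by positivity : 0 ≤ 2 * K)
            simp only [Function.comp_apply]
            push_cast
            linarith)
        simpa using h1
    refine growth hμ Set.univ (V := ⊤) ?_ htb (ns := id) tendsto_id (fun v _ => ?_) hlim
    · symm
      rw [eq_top_iff]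
      intro x _
      by_cases hx : x = 0
      · rw [hx]; exact Submodule.zero_mem _
      · have hx' : ‖x‖ ≠ 0 := norm_ne_zero_iff.2 hx
        have e : x = ‖x‖ • (‖x‖⁻¹ • x) := by rw [smul_smul, mul_inv_cancel₀ hx', one_smul]
        rw [e]
        refine Submodule.smul_mem _ _ (Submodule.subset_span ?_)
        exact ⟨⟨‖x‖⁻¹ • x, by simp [norm_smul, hx']⟩, trivial, rfl⟩
    · have hz : Tendsto (fun n : ℕ => (K ^ 2 + 2 * K * C) / (n : ℝ)) atTop (𝓝 0) :=
        tendsto_const_div_atTop_nhds_zero_nat _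
      refine squeeze_zero (fun n => div_nonneg (Wvar_nonneg _ _ _ _) (by positivity))
        (fun n => ?_) hz
      simp only [id]
      rcases Nat.eq_zero_or_pos n with rfl | hn
      · simp
      · have hn' : (0 : ℝ) < n := by exact_mod_cast hn
        rw [div_le_div_iff₀ (by positivity) hn']
        have := mul_le_mul_of_nonneg_right (hW n v) hn'.le
        linarith
  · have hz : Tendsto (fun n : ℕ => l - C / (n : ℝ)) atTop (𝓝 (l - 0)) :=
      tendsto_const_nhds.sub (tendsto_const_div_atTop_nhds_zero_nat _)
    rw [sub_zero] at hz
    refine le_of_tendsto_of_tendsto hz hlim ?_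
    filter_upwards [eventually_gt_atTop 0] with n hn
    have hn' : (0 : ℝ) < n := by exact_mod_cast hn
    have h1 := Smean_le_log_rnorm hμ htb v hv n
    have h2 := (abs_le.1 (hS n v)).1
    rw [inv_mul_eq_div, le_div_iff₀ hn', sub_mul, div_mul_cancel₀ _ hn'.ne']
    linarith

/-- the mixture -/
def mix (μ₀ μ₁ : Measure (GLd d)) (t : ℝ) : Measure (GLd d) :=
  (Real.toNNReal (1 - t) • μ₀ + Real.toNNReal t • μ₁ : Measure (GLd d))

lemma mix_good {μ₀ μ₁ : Measure (GLd d)} [IsProbabilityMeasure μ₀] [IsProbabilityMeasure μ₁]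
    {S : Set (GLd d)} (hS : IsCompact S) (h₀ : μ₀ Sᶜ = 0) (h₁ : μ₁ Sᶜ = 0) {t : ℝ}
    (ht0 : 0 ≤ t) (ht1 : t ≤ 1) : Good (mix μ₀ μ₁ t) := by
  refine ⟨⟨?_⟩, S, hS, ?_⟩
  · simp only [mix, Measure.add_apply, Measure.smul_apply, measure_univ]
    simp only [ENNReal.smul_def, smul_eq_mul, mul_one]
    rw [← ENNReal.coe_add, ← Real.toNNReal_add (by linarith) ht0]
    simp
  · simp [mix, h₀, h₁]

lemma integral_mix {E : Type*} [NormedAddCommGroup E] [NormedSpace ℝ E]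
    {μ₀ μ₁ : Measure (GLd d)} (h₀ : Good μ₀) (h₁ : Good μ₁) {t : ℝ}
    (ht0 : 0 ≤ t) (ht1 : t ≤ 1) {f : GLd d → E} (hf : Continuous f) :
    ∫ g, f g ∂(mix μ₀ μ₁ t) = (1 - t) • ∫ g, f g ∂μ₀ + t • ∫ g, f g ∂μ₁ := by
  rw [mix, integral_add_measure, integral_smul_nnreal_measure, integral_smul_nnreal_measure]
  · simp only [NNReal.smul_def, Real.coe_toNNReal _ ht0, Real.coe_toNNReal _ (sub_nonneg.2 ht1)]
  · exact (h₀.integrable hf).smul_measure_nnreal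
  · exact (h₁.integrable hf).smul_measure_nnreal

/-- complexification -/
def cplx {f : Sph d → ℝ} (hf : Continuous f) : C(Sph d, ℂ) :=
  ⟨fun v => (f v : ℂ), Complex.continuous_ofReal.comp hf⟩

lemma cplx_apply {f : Sph d → ℝ} (hf : Continuous f) (v : Sph d) : cplx hf v = (f v : ℂ) := rfl

lemma Qc_cplx {μ : Measure (GLd d)} (hμ : Good μ) {f : Sph d → ℝ} (hf : Continuous f) (v : Sph d) :
    Qc hμ (cplx hf) v = ((∫ g, f (act g v) ∂μ : ℝ) : ℂ) := by
  rw [Qc_apply]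
  simp only [cplx_apply]
  exact integral_ofReal

lemma Q_pow_cplx (P : Pert d) {t : ℝ} (ht0 : 0 ≤ t) (ht1 : t ≤ 1)
    (hg : Good (mix P.μ₀ P.μ₁ t)) (k : ℕ) {f : Sph d → ℝ} (hf : Continuous f) (v : Sph d) :
    (P.Q t ^ k) (cplx hf) v = (Pavg (mix P.μ₀ P.μ₁ t) k f v : ℂ) := by
  induction k generalizing f with
  | zero => simp [Pavg, mconvN_zero, act_one, cplx_apply]
  | succ k ih =>
    have hc : Continuous (Pavg (mix P.μ₀ P.μ₁ t) 1 f) := continuous_Pavg hg 1 hf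
    have e : (P.Q t ^ (k + 1)) (cplx hf) = (P.Q t ^ k) (P.Q t (cplx hf)) := by rw [pow_succ]; rfl
    have e2 : P.Q t (cplx hf) = cplx hc := by
      ext w
      have hc2 : Continuous (fun g => f (act g w)) := hf.comp (continuous_act_left w)
      rw [Pert.Q_apply, ContinuousMap.add_apply, ContinuousMap.smul_apply,
        ContinuousMap.sub_apply, Qc_cplx, Qc_cplx, cplx_apply, Pavg, mconvN_one,
        integral_mix P.g₀ P.g₁ ht0 ht1 hc2]
      simp only [smul_eq_mul]
      push_cast
      ring
    rw [e, e2, ih hc, Pavg_succ hg k hf]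

theorem main_aux
    (hd : 2 ≤ d) (S : Set (GLd d)) (hS : IsCompact S)
    (μ₀ μ₁ : Measure (GLd d)) [IsProbabilityMeasure μ₀] [IsProbabilityMeasure μ₁]
    (hμ₀S : μ₀ Sᶜ = 0) (hμ₁S : μ₁ Sᶜ = 0)
    (hqi : QuasiIrreducible μ₀) (hgap : L2 μ₀ < L1 μ₀) :
    ∃ ε : ℝ, 0 < ε ∧ ε ≤ 1 ∧ ∃ a : ℕ → ℝ,
      (Summable fun k : ℕ => |a k| * ε ^ k) ∧
      ∀ t : ℝ, 0 ≤ t → t < ε →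
        L1 (mix μ₀ μ₁ t) = ∑' k : ℕ, a k * t ^ k := by
  have hd0 : 0 < d := by omega
  have g₀ : Good μ₀ := ⟨inferInstance, S, hS, hμ₀S⟩
  have g₁ : Good μ₁ := ⟨inferInstance, S, hS, hμ₁S⟩
  have a₀ : ∀ᵐ g ∂μ₀, g ∈ S := hμ₀S
  have a₁ : ∀ᵐ g ∂μ₁, g ∈ S := hμ₁S
  obtain ⟨b, hb, β, hβ, hbt⟩ := partA g₀ hd0 hqi
  obtain ⟨m, hm, hm2⟩ : ∃ m : ℕ, 0 < m ∧
      ∫ g, Real.log (N2 g) ∂(mconvN μ₀ m) < 2 * b m := by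
    have h1 := (tendsto_N2 hd g₀).sub (hbt.const_mul 2)
    have h2 : L12 μ₀ - 2 * β < 0 := by
      rw [L2] at hgap
      linarith
    obtain ⟨m, hm, hm0⟩ := ((h1.eventually (gt_mem_nhds h2)).and (eventually_gt_atTop 0)).exists
    refine ⟨m, hm0, ?_⟩
    have hm' : (0 : ℝ) < m := by exact_mod_cast hm0
    have h3 : (∫ g, Real.log (N2 g) ∂(mconvN μ₀ m) - 2 * b m) / m < 0 := by
      refine lt_of_eq_of_lt ?_ hm
      field_simp
    have h4 := (div_neg_iff.1 h3)
    rcases h4 with h4 | h4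
    · linarith [h4.2]
    · linarith [h4.1]
  obtain ⟨α, hα0, hα1, ρ, hρ0, hρ1, hcon⟩ := contraction hd g₀ (hb m) hm2
  obtain ⟨M, hM1, hM⟩ := exists_dl_bound hd hS
  obtain ⟨Cφ, hCφ, hlip⟩ := exists_sig_lip hS
  have hMint : ∀ {μ : Measure (GLd d)}, Good μ → (∀ᵐ g ∂μ, g ∈ S) → ∀ v w : Sph d,
      ∫ g, dl (act g v) (act g w) ^ α ∂μ ≤ M * dl v w ^ α := by
    intro μ hμ hae v w
    have := hμ.prob
    have h := integral_mono_ae (μ := μ) (hμ.integrable (continuous_dl_rpow hα0.le v w))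
      (integrable_const (M * dl v w ^ α)) (by
        filter_upwards [hae] with g hg using hM α hα0.le hα1 g hg v w)
    simpa using h
  have hφ : ∀ {μ : Measure (GLd d)} (hμ : Good μ), (∀ᵐ g ∂μ, g ∈ S) →
      Hol α Cφ (cplx (continuous_Smean hμ 1)) := by
    intro μ hμ hae v w
    have := hμ.prob
    rw [cplx_apply, cplx_apply, ← Complex.ofReal_sub, Complex.norm_real, Smean_one, Smean_one,
      ← integral_sub (hμ.integrable (continuous_sig_left v)) (hμ.integrable (continuous_sig_left w))]
    have h := norm_integral_le_of_norm_le_const (μ := μ) (f := fun g => sig g v - sig g w)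
      (C := Cφ * dl v w ^ α) (by
        filter_upwards [hae] with g hg using hlip α hα0.le hα1 g hg v w)
    simpa using h
  let P : Pert d :=
    { α := α, M := M, ρ := ρ, m := m, Cφ := Cφ, μ₀ := μ₀, μ₁ := μ₁, g₀ := g₀, g₁ := g₁
      φ₀ := cplx (continuous_Smean g₀ 1), φ₁ := cplx (continuous_Smean g₁ 1)
      hα := hα0.le, hM := hM1, hρ0 := hρ0, hρ1 := hρ1, hm := hm, hCφ := hCφ
      hM₀ := fun f C hC hf => hf.integral hα0.le hC g₀ (Qc_apply g₀ f) (hMint g₀ a₀)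
      hM₁ := fun f C hC hf => hf.integral hα0.le hC g₁ (Qc_apply g₁ f) (hMint g₁ a₁)
      hρ := fun f C hC hf => hf.integral hα0.le hC (g₀.convN m) (Qc_pow_apply g₀ m f) hcon
      hφ₀ := hφ g₀ a₀
      hφ₁ := hφ g₁ a₁ }
  have : Nontrivial (Ed d) := by
    have : Nonempty (Fin d) := ⟨⟨0, hd0⟩⟩
    infer_instance
  obtain ⟨v₀, -⟩ := exists_sph (d := d) (V := ⊤) top_ne_bot
  obtain ⟨r, hr0, hr1, θ, B, hθ0, hθ1, hB, lam, hdiff, hlam⟩ := P.exists_lam v₀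
  obtain ⟨ε, hε0, hεr, a, hsum, ha⟩ := analytic_re hr0 hr1 hdiff
  refine ⟨ε, hε0, hεr.trans hr1, a, hsum, fun t ht0 ht => ?_⟩
  rw [← ha t ht0 ht]
  have ht1 : t ≤ 1 := by linarith
  have hg : Good (mix μ₀ μ₁ t) := mix_good hS hμ₀S hμ₁S ht0 ht1
  have htm : (t : ℂ) ∈ Metric.ball (0 : ℂ) r := by
    rw [mem_ball_zero_iff, Complex.norm_real, Real.norm_of_nonneg ht0]
    linarith
  have hφt : P.φ t = cplx (continuous_Smean hg 1) := by
    ext w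
    have e : Smean (mix μ₀ μ₁ t) 1 w = (1 - t) • Smean μ₀ 1 w + t • Smean μ₁ 1 w := by
      rw [Smean_one, Smean_one, Smean_one, integral_mix g₀ g₁ ht0 ht1 (continuous_sig_left w)]
    rw [cplx_apply, e]
    change (Smean μ₀ 1 w : ℂ) + (t : ℂ) • ((Smean μ₁ 1 w : ℂ) - (Smean μ₀ 1 w : ℂ)) = _
    simp only [smul_eq_mul]
    push_cast
    ring
  have hP : ∀ k v, |Pavg (mix μ₀ μ₁ t) k (Smean (mix μ₀ μ₁ t) 1) v - (lam t).re| ≤ B * θ ^ k := by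
    intro k v
    have h1 := hlam t htm k v
    rw [hφt] at h1
    have h2 := Q_pow_cplx P ht0 ht1 hg k (continuous_Smean hg 1) v
    rw [h2] at h1
    have h3 := (Complex.abs_re_le_norm _).trans h1
    simpa using h3
  refine L1_eq hd0 hg (C := B * (1 - θ)⁻¹) fun n v => ?_
  have e : Smean (mix μ₀ μ₁ t) n v - n * (lam t).re = ∑ k ∈ Finset.range n,
      (Pavg (mix μ₀ μ₁ t) k (Smean (mix μ₀ μ₁ t) 1) v - (lam t).re) := by
    rw [Finset.sum_sub_distrib, Smean_eq_sum hg]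
    simp
  rw [e]
  calc _ ≤ ∑ k ∈ Finset.range n,
        |Pavg (mix μ₀ μ₁ t) k (Smean (mix μ₀ μ₁ t) 1) v - (lam t).re| :=
        Finset.abs_sum_le_sum_abs _ _
    _ ≤ ∑ k ∈ Finset.range n, B * θ ^ k := Finset.sum_le_sum fun k _ => hP k v
    _ = B * ∑ k ∈ Finset.range n, θ ^ k := by rw [Finset.mul_sum]
    _ ≤ B * (1 - θ)⁻¹ := by
      refine mul_le_mul_of_nonneg_left ?_ hB
      rw [← tsum_geometric_of_lt_one hθ0.le hθ1]
      exact (summable_geometric_of_lt_one hθ0.le hθ1).sum_le_tsum _ (fun k _ => by positivity)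

theorem analyticity_bernoulli_quasi_irreducible
    (d : ℕ) (hd : 2 ≤ d) (S : Set (GLd d)) (hS : IsCompact S)
    (μ₀ μ₁ : Measure (GLd d)) [IsProbabilityMeasure μ₀] [IsProbabilityMeasure μ₁]
    (hμ₀S : μ₀ Sᶜ = 0) (hμ₁S : μ₁ Sᶜ = 0)
    (hqi : QuasiIrreducible μ₀) (hgap : L2 μ₀ < L1 μ₀) :
    ∃ ε : ℝ, 0 < ε ∧ ε ≤ 1 ∧ ∃ a : ℕ → ℝ,
      (Summable fun k : ℕ => |a k| * ε ^ k) ∧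
      ∀ t : ℝ, 0 ≤ t → t < ε →
        L1 (Real.toNNReal (1 - t) • μ₀ + Real.toNNReal t • μ₁ : Measure (GLd d)) = ∑' k : ℕ, a k * t ^ k := by
  exact main_aux hd S hS μ₀ μ₁ hμ₀S hμ₁S hqi hgap

end
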